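/- arXiv:1211.0333 — 4 statements merged into one kernel-verified Lean document; each statement's English description precedes it below -/
import Mathlib

section
/- Let H ≤ G be a subgroup such that the index |G:H| is invertible in k. Then a finitely generated ΛG-module M is projective if and only if its restriction M↓ to ΛH is a projective ΛH-module; consequently the global dimensions of ΛG and ΛH are equal. -/
set_option maxHeartbeats 1000000
set_option linter.unusedSectionVars false
set_option linter.unusedVariables false

noncomputable section
open Finset
open scoped Classical


section CoreSGA

variable {k : Type} [CommRing k] {Λ : Type} [Ring Λ] [Algebra k Λ]
variable {G : Type} [Group G] [Fintype G]

/-- The skew group algebra `Λ ⊗_k kG` (as functions `G → Λ`), with multiplication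
`(λ ⊗ g) ⬝ (μ ⊗ h) = λ · g(μ) ⊗ gh`. -/
structure SGA (σ : G →* (Λ ≃ₐ[k] Λ)) : Type where
  toFun : G → Λ

namespace SGA

variable {σ : G →* (Λ ≃ₐ[k] Λ)}

@[simp] lemma mk_toFun (f : G → Λ) : (SGA.mk f : SGA σ).toFun = f := rfl

@[ext] lemma ext {f h : SGA σ} (w : ∀ g, f.toFun g = h.toFun g) : f = h := by
  cases f; cases h; simp only [mk.injEq]; funext g; exact w g

/-- The underlying-function equivalence. -/
def equivFun : SGA σ ≃ (G → Λ) := ⟨toFun, mk, fun _ => rfl, fun _ => rfl⟩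

instance : AddCommGroup (SGA σ) := (equivFun (σ := σ)).addCommGroup

@[simp] lemma toFun_add (f h : SGA σ) (g : G) : (f + h).toFun g = f.toFun g + h.toFun g := rfl
@[simp] lemma toFun_zero (g : G) : (0 : SGA σ).toFun g = 0 := rfl
@[simp] lemma toFun_neg (f : SGA σ) (g : G) : (-f).toFun g = -(f.toFun g) := rfl

instance : Mul (SGA σ) :=
  ⟨fun f h => ⟨fun x => ∑ g : G, f.toFun g * σ g (h.toFun (g⁻¹ * x))⟩⟩

instance : One (SGA σ) := ⟨⟨fun x => if x = 1 then 1 else 0⟩⟩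

@[simp] lemma toFun_mul (f h : SGA σ) (x : G) :
    (f * h).toFun x = ∑ g : G, f.toFun g * σ g (h.toFun (g⁻¹ * x)) := rfl

lemma toFun_one (x : G) : (1 : SGA σ).toFun x = if x = 1 then 1 else 0 := rfl

protected lemma one_mul (f : SGA σ) : 1 * f = f := by
  ext x
  rw [toFun_mul]
  rw [Finset.sum_eq_single (1 : G)]
  · simp [toFun_one]
  · intro b _ hb
    simp [toFun_one, hb]
  · simp

protected lemma mul_one (f : SGA σ) : f * 1 = f := by
  ext x
  rw [toFun_mul]
  rw [Finset.sum_eq_single (x : G)]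
  · simp [toFun_one]
  · intro b _ hb
    have : b⁻¹ * x ≠ 1 := by
      intro hc
      rw [inv_mul_eq_one] at hc
      exact hb hc
    simp [toFun_one, this]
  · simp

protected lemma mul_assoc (f h e : SGA σ) : f * h * e = f * (h * e) := by
  ext x
  rw [toFun_mul, toFun_mul]
  simp only [toFun_mul, Finset.sum_mul, map_sum, Finset.mul_sum, map_mul]
  rw [Finset.sum_comm]
  refine Finset.sum_congr rfl fun u _ => ?_
  rw [← Fintype.sum_equiv (Equiv.mulLeft u)
    (fun v => f.toFun u * σ u (h.toFun v) * σ (u * v) (e.toFun ((u * v)⁻¹ * x)))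
    (fun g => f.toFun u * σ u (h.toFun (u⁻¹ * g)) * σ g (e.toFun (g⁻¹ * x)))
    (fun v => by simp [Equiv.mulLeft])]
  refine Finset.sum_congr rfl fun v _ => ?_
  have h3 : (u * v)⁻¹ * x = v⁻¹ * (u⁻¹ * x) := by group
  have h4 : σ u (σ v (e.toFun (v⁻¹ * (u⁻¹ * x)))) = σ (u * v) (e.toFun (v⁻¹ * (u⁻¹ * x))) := by
    rw [map_mul σ]; rfl
  rw [h3, ← h4, mul_assoc]

protected lemma left_distrib (f h e : SGA σ) : f * (h + e) = f * h + f * e := by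
  ext x
  simp [mul_add, Finset.sum_add_distrib]

protected lemma right_distrib (f h e : SGA σ) : (f + h) * e = f * e + h * e := by
  ext x
  simp [add_mul, Finset.sum_add_distrib]

protected lemma zero_mul (f : SGA σ) : 0 * f = 0 := by
  ext x; simp

protected lemma mul_zero (f : SGA σ) : f * 0 = 0 := by
  ext x; simp

instance instRing : Ring (SGA σ) :=
  { (inferInstance : AddCommGroup (SGA σ)),
    (inferInstance : Mul (SGA σ)), (inferInstance : One (SGA σ)) with
    mul_assoc := SGA.mul_assoc
    one_mul := SGA.one_mul
    mul_one := SGA.mul_one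
    left_distrib := SGA.left_distrib
    right_distrib := SGA.right_distrib
    zero_mul := SGA.zero_mul
    mul_zero := SGA.mul_zero }

/-- The canonical inclusion `Λ → ΛG`, `λ ↦ λ ⊗ 1`. -/
def emb (σ : G →* (Λ ≃ₐ[k] Λ)) : Λ →+* SGA σ where
  toFun a := ⟨fun x => if x = 1 then a else 0⟩
  map_one' := rfl
  map_zero' := by ext x; simp
  map_add' a b := by ext x; by_cases hx : x = 1 <;> simp [hx]
  map_mul' a b := by
    ext x
    rw [toFun_mul]
    rw [Finset.sum_eq_single (1 : G)]
    · by_cases hx : x = 1 <;> simp [hx]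
    · intro b' _ hb'; simp [hb']
    · simp

end SGA

end CoreSGA

section GeneralDefs

/-- An idempotent `e` is primitive if it is nonzero and cannot be written as a sum of two
nonzero orthogonal idempotents. -/
def IsPrimitiveIdempotent (A : Type) [Ring A] (e : A) : Prop :=
  IsIdempotentElem e ∧ e ≠ 0 ∧
    ∀ f g : A, IsIdempotentElem f → IsIdempotentElem g → f * g = 0 → g * f = 0 →
      e = f + g → f = 0 ∨ g = 0

/-- A finite family `e : Fin n → A` is a complete set of primitive orthogonal idempotents. -/
def IsCompletePrimitiveOrthogonalSystem (A : Type) [Ring A] {n : ℕ} (e : Fin n → A) : Prop :=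
  (∀ i, IsPrimitiveIdempotent A (e i)) ∧
    (∀ i j, i ≠ j → e i * e j = 0) ∧ (∑ i, e i = 1)

/-- A ring is connected (indecomposable as an algebra) if its only central idempotents
are `0` and `1`. -/
def IsConnectedRing (A : Type) [Ring A] : Prop :=
  Nontrivial A ∧ ∀ e : A, IsIdempotentElem e → (∀ x : A, e * x = x * e) → e = 0 ∨ e = 1

/-- A ring is basic if it admits a complete set of primitive orthogonal idempotents `e i`
such that the indecomposable projective left modules `A e i` are pairwise nonisomorphic. -/
def IsBasicRing (A : Type) [Ring A] : Prop :=
  ∃ (n : ℕ) (e : Fin n → A), IsCompletePrimitiveOrthogonalSystem A e ∧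
    ∀ i j, i ≠ j →
      IsEmpty ((Submodule.span A {e i} : Submodule A A) ≃ₗ[A] (Submodule.span A {e j} : Submodule A A))

/-- `projDimLE A n M` : the `A`-module `M` admits a projective resolution of length at
most `n`, i.e. has projective dimension `≤ n`. -/
def projDimLE (A : Type) [Ring A] (n : ℕ) (M : Type) [AddCommGroup M] [Module A M] : Prop :=
  ∃ (P : ℕ → ModuleCat.{0} A) (d : (i : ℕ) → (P (i + 1) →ₗ[A] P i)) (ε : P 0 →ₗ[A] M),
    (∀ i, Module.Projective A (P i)) ∧
    Function.Surjective ε ∧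
    LinearMap.range (d 0) = LinearMap.ker ε ∧
    (∀ i, LinearMap.range (d (i + 1)) = LinearMap.ker (d i)) ∧
    (∀ i, n < i → ∀ x : P i, x = 0)

/-- The (little) global dimension of a ring, as an element of `ℕ∞`: the least `n` such that
every finitely generated `A`-module has projective dimension at most `n` (and `⊤` if there
is no such `n`). -/
noncomputable def globalDim (A : Type) [Ring A] : ℕ∞ :=
  sInf {c : ℕ∞ | ∃ n : ℕ, c = (n : ℕ∞) ∧
    ∀ (M : Type) [AddCommGroup M] [Module A M], Module.Finite A M → projDimLE A n M}

/-- A module is indecomposable if it is nonzero and is not the internal direct sum of two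
nonzero submodules. -/
def IsIndecomposableModule (A : Type) [Ring A] (M : Type) [AddCommGroup M] [Module A M] : Prop :=
  Nontrivial M ∧ ∀ N₁ N₂ : Submodule A M, IsCompl N₁ N₂ → N₁ = ⊥ ∨ N₂ = ⊥

/-- A ring has finite representation type if there are only finitely many isomorphism classes
of finitely generated indecomposable left modules. -/
def FiniteRepType (A : Type) [Ring A] : Prop :=
  ∃ S : Set (Σ m : ℕ, Submodule A (Fin m → A)), S.Finite ∧
    ∀ (M : Type) [AddCommGroup M] [Module A M], Module.Finite A M →
      IsIndecomposableModule A M →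
        ∃ p ∈ S, Nonempty (M ≃ₗ[A] ((Fin p.1 → A) ⧸ p.2))

/-- Two rings are Morita equivalent if their categories of modules are equivalent. -/
def MoritaEquivalent (A B : Type) [Ring A] [Ring B] : Prop :=
  Nonempty (ModuleCat.{0} A ≌ ModuleCat.{0} B)

/-- An Auslander algebra: global dimension at most `2`, and there is an exact sequence
`0 → A → I₀ → I₁` with `I₀`, `I₁` both projective and injective (equivalently, in a minimal
injective resolution `0 → A → I₀ → I₁ → I₂ → 0` the terms `I₀` and `I₁` are projective). -/
def IsAuslanderAlgebra (A : Type) [Ring A] : Prop :=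
  globalDim A ≤ 2 ∧
    ∃ (I₀ I₁ : ModuleCat.{0} A) (f : A →ₗ[A] I₀) (g : I₀ →ₗ[A] I₁),
      Module.Injective A I₀ ∧ Module.Projective A I₀ ∧
      Module.Injective A I₁ ∧ Module.Projective A I₁ ∧
      Function.Injective f ∧ LinearMap.ker g = LinearMap.range f

/-- The `i`-th power of a left ideal (with `I ^ 0 = ⊤`). -/
def leftIdealPow (A : Type) [Ring A] (I : Submodule A A) : ℕ → Submodule A A
  | 0 => ⊤
  | n + 1 => Submodule.span A {x : A | ∃ a ∈ I, ∃ b ∈ leftIdealPow A I n, x = a * b}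

end GeneralDefs
section Restriction

/-- Restriction of scalars along a ring homomorphism, as a type synonym. -/
def Res {A B : Type} [Ring A] [Ring B] (φ : A →+* B) (M : Type) : Type := M

instance {A B : Type} [Ring A] [Ring B] (φ : A →+* B) (M : Type) [AddCommGroup M] :
    AddCommGroup (Res φ M) := inferInstanceAs (AddCommGroup M)

instance {A B : Type} [Ring A] [Ring B] (φ : A →+* B) (M : Type) [AddCommGroup M] [Module B M] :
    Module A (Res φ M) := Module.compHom M φ

end Restriction

section Induction

variable {A B : Type} [Ring A] [Ring B] (φ : A →+* B)
variable (V : Type) [AddCommGroup V] [Module A V]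

/-- The submodule of relations defining the induced module `B ⊗_A V`. -/
def inducedRelations : Submodule B (V →₀ B) :=
  Submodule.span B
    {z | ∃ (a : A) (v : V), z = Finsupp.single (a • v) (1 : B) - Finsupp.single v (φ a)}

/-- The induced module `B ⊗_A V` along `φ : A →+* B`, realized as a quotient of the free
module on `V`. -/
def Induced : Type := (V →₀ B) ⧸ inducedRelations φ V

instance : AddCommGroup (Induced φ V) :=
  inferInstanceAs (AddCommGroup ((V →₀ B) ⧸ inducedRelations φ V))

instance : Module B (Induced φ V) :=
  inferInstanceAs (Module B ((V →₀ B) ⧸ inducedRelations φ V))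

end Induction
section SubEmb

namespace SGA

variable {k : Type} [CommRing k] {Λ : Type} [Ring Λ] [Algebra k Λ]
variable {G : Type} [Group G] [Fintype G]

/-- For a subgroup `H ≤ G`, the subalgebra inclusion `ΛH → ΛG`. -/
def subEmb (σ : G →* (Λ ≃ₐ[k] Λ)) (H : Subgroup G) [Fintype H] :
    SGA (σ.comp H.subtype) →+* SGA σ where
  toFun f := ⟨fun g => if hg : g ∈ H then f.toFun ⟨g, hg⟩ else 0⟩
  map_one' := by
    ext x
    simp only [mk_toFun]
    by_cases hx : x ∈ H
    · rw [dif_pos hx, toFun_one, toFun_one]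
      by_cases h1 : x = 1
      · subst h1; simp
      · rw [if_neg h1, if_neg (fun hc => h1 (by simpa [Subtype.ext_iff] using hc))]
    · rw [dif_neg hx, toFun_one,
        if_neg (fun h1 : x = 1 => hx (by rw [h1]; exact H.one_mem))]
  map_zero' := by
    ext x
    simp only [mk_toFun, toFun_zero]
    by_cases hx : x ∈ H <;> simp [hx]
  map_add' f h := by
    ext x
    simp only [mk_toFun, toFun_add]
    by_cases hx : x ∈ H <;> simp [hx]
  map_mul' f h := by
    ext x
    simp only [mk_toFun, toFun_mul]
    by_cases hx : x ∈ H
    · rw [dif_pos hx]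
      rw [← Finset.sum_filter_add_sum_filter_not Finset.univ (· ∈ H)
        (fun g => (if hg : g ∈ H then f.toFun ⟨g, hg⟩ else 0) *
          σ g ((if hg' : g⁻¹ * x ∈ H then h.toFun ⟨g⁻¹ * x, hg'⟩ else 0)))]
      have h2 : ∑ g ∈ Finset.univ.filter (fun g => ¬ g ∈ H),
          (if hg : g ∈ H then f.toFun ⟨g, hg⟩ else 0) *
            σ g ((if hg' : g⁻¹ * x ∈ H then h.toFun ⟨g⁻¹ * x, hg'⟩ else 0)) = 0 := by
        refine Finset.sum_eq_zero fun g hg => ?_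
        rw [Finset.mem_filter] at hg
        rw [dif_neg hg.2, zero_mul]
      rw [h2, add_zero]
      rw [Finset.sum_subtype (p := (· ∈ H)) (Finset.univ.filter (· ∈ H)) (by simp)
        (fun g => (if hg : g ∈ H then f.toFun ⟨g, hg⟩ else 0) *
          σ g ((if hg' : g⁻¹ * x ∈ H then h.toFun ⟨g⁻¹ * x, hg'⟩ else 0)))]
      refine Finset.sum_congr rfl fun u _ => ?_
      rw [dif_pos u.2, dif_pos (H.mul_mem (H.inv_mem u.2) hx)]
      rfl
    · rw [dif_neg hx]
      refine (Finset.sum_eq_zero fun g _ => ?_).symm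
      by_cases hg : g ∈ H
      · have hgx : g⁻¹ * x ∉ H := by
          intro hc
          exact hx (by simpa using H.mul_mem hg hc)
        rw [dif_neg hgx, map_zero, mul_zero]
      · rw [dif_neg hg, zero_mul]

end SGA

end SubEmb
section Frob

open CategoryTheory

variable {A B : Type} [Ring A] [Ring B]

/-- Restriction of a linear map. -/
def Res.map (φ : A →+* B) {M N : Type} [AddCommGroup M] [AddCommGroup N] [Module B M] [Module B N]
    (f : M →ₗ[B] N) : Res φ M →ₗ[A] Res φ N where
  toFun := fun x => f x
  map_add' := fun x y => f.map_add x y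
  map_smul' := fun a x => f.map_smul (φ a) x

/-- projective dimension at most `n`. -/
def PD (A : Type) [Ring A] (n : ℕ) (M : Type) [AddCommGroup M] [Module A M] : Prop :=
  HasProjectiveDimensionLT (ModuleCat.of A M) (n + 1)

lemma PD_zero (M : Type) [AddCommGroup M] [Module A M] : PD A 0 M ↔ Module.Projective A M := by
  unfold PD
  rw [IsProjective.iff_projective, ← projective_iff_hasProjectiveDimensionLT_one]

lemma PD_retract {n : ℕ} {M N : Type} [AddCommGroup M] [Module A M] [AddCommGroup N] [Module A N]
    (i : M →ₗ[A] N) (r : N →ₗ[A] M) (h : ∀ x, r (i x) = x) (hN : PD A n N) : PD A n M := by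
  unfold PD at *
  have R : Retract (ModuleCat.of A M) (ModuleCat.of A N) :=
    { i := ModuleCat.ofHom i, r := ModuleCat.ofHom r, retract := by ext x; exact h x }
  exact R.hasProjectiveDimensionLT _

lemma PD_equiv {n : ℕ} {M N : Type} [AddCommGroup M] [Module A M] [AddCommGroup N] [Module A N]
    (e : M ≃ₗ[A] N) : PD A n M ↔ PD A n N :=
  ⟨PD_retract e.symm.toLinearMap e.toLinearMap (by simp),
    PD_retract e.toLinearMap e.symm.toLinearMap (by simp)⟩

lemma PD_step {n : ℕ} {P M : Type} [AddCommGroup P] [Module A P] [AddCommGroup M] [Module A M]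
    (g : P →ₗ[A] M) (hg : Function.Surjective g) (hP : Module.Projective A P) :
    PD A (n + 1) M ↔ PD A n (LinearMap.ker g) := by
  have h := (LinearMap.shortExact_shortComplexKer hg).hasProjectiveDimensionLT_X₃_iff n
    ((IsProjective.iff_projective P).1 hP)
  exact h

lemma projDimLE_to (n : ℕ) : ∀ (M : Type) [AddCommGroup M] [Module A M],
    projDimLE A n M → PD A n M := by
  induction n with
  | zero =>
    rintro M _ _ ⟨P, d, ε, hP, hs, h0, h1, hn⟩
    have hk : LinearMap.ker ε = ⊥ := by
      rw [← h0, LinearMap.range_eq_bot]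
      ext x
      rw [hn 1 (by norm_num) x]; simp
    have e := LinearEquiv.ofBijective ε ⟨LinearMap.ker_eq_bot.1 hk, hs⟩
    rw [← PD_equiv e, PD_zero]
    exact hP 0
  | succ n ih =>
    rintro M _ _ ⟨P, d, ε, hP, hs, h0, h1, hn⟩
    rw [PD_step ε hs (hP 0)]
    apply ih
    refine ⟨fun i => P (i+1), fun i => d (i+1),
      (d 0).codRestrict (LinearMap.ker ε) (fun x => h0 ▸ LinearMap.mem_range_self _ x),
      fun i => hP _, ?_, ?_, fun i => h1 _, fun i hi => hn _ (by omega)⟩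
    · rintro ⟨x, hx⟩
      rw [← h0] at hx
      obtain ⟨y, hy⟩ := hx
      exact ⟨y, Subtype.ext hy⟩
    · rw [LinearMap.ker_codRestrict]; exact h1 0

/-- Prepend a module. -/
def consMod (X : ModuleCat.{0} A) (P : ℕ → ModuleCat.{0} A) : ℕ → ModuleCat.{0} A
  | 0 => X
  | i + 1 => P i

/-- Prepend a map. -/
def consMap (X : ModuleCat.{0} A) (P : ℕ → ModuleCat.{0} A) (e : P 0 →ₗ[A] X)
    (d : (i : ℕ) → (P (i + 1) →ₗ[A] P i)) :
    (i : ℕ) → (consMod X P (i + 1) →ₗ[A] consMod X P i)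
  | 0 => e
  | i + 1 => d i

lemma projDimLE_of (n : ℕ) : ∀ (M : Type) [AddCommGroup M] [Module A M],
    PD A n M → projDimLE A n M := by
  induction n with
  | zero =>
    intro M _ _ h
    rw [PD_zero] at h
    let P : ℕ → ModuleCat.{0} A := consMod (ModuleCat.of A M)
      (fun _ => ModuleCat.of A PUnit)
    have hsub : ∀ i (x y : P (i+1)), x = y := fun i x y => (rfl : (x : PUnit) = y)
    refine ⟨P, fun i => 0, (LinearMap.id : M →ₗ[A] M), ?_, fun x => ⟨x, rfl⟩, ?_, ?_, ?_⟩
    · rintro (_ | i)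
      · exact h
      · exact (inferInstance : Module.Projective A PUnit)
    · apply le_antisymm
      · rintro x ⟨y, rfl⟩
        exact rfl
      · intro x hx
        exact ⟨0, Eq.symm hx⟩
    · intro i
      ext x
      simp [hsub i x 0]
    · rintro (_ | i) hi x
      · omega
      · exact hsub i x 0
  | succ n ih =>
    intro M _ _ h
    have hs : Function.Surjective (Finsupp.linearCombination A (id : M → M)) :=
      Finsupp.linearCombination_id_surjective A M
    rw [PD_step _ hs inferInstance] at h
    obtain ⟨P, d, ε, hP, hs', h0, h1, hn⟩ := ih _ h
    let Q : ℕ → ModuleCat.{0} A := consMod (ModuleCat.of A (M →₀ A)) P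
    refine ⟨Q, consMap (ModuleCat.of A (M →₀ A)) P
      ((LinearMap.ker (Finsupp.linearCombination A (id : M → M))).subtype ∘ₗ ε) d, Finsupp.linearCombination A (id : M → M), ?_, hs, ?_, ?_, ?_⟩
    · rintro (_ | i)
      · exact (inferInstance : Module.Projective A (M →₀ A))
      · exact hP i
    · change LinearMap.range ((LinearMap.ker (Finsupp.linearCombination A (id : M → M))).subtype ∘ₗ ε) = _
      rw [LinearMap.range_comp, LinearMap.range_eq_top.2 hs', Submodule.map_top,
        Submodule.range_subtype]
      rfl
    · rintro (_ | i)
      · change LinearMap.range (d 0) = LinearMap.ker ((LinearMap.ker (Finsupp.linearCombination A (id : M → M))).subtype ∘ₗ ε)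
        rw [h0, LinearMap.ker_comp, Submodule.ker_subtype]; rfl
      · exact h1 i
    · rintro (_ | i) hi x
      · omega
      · exact hn i (by omega) x

/-- Frobenius-type data for a ring extension. -/
structure FrobData (φ : A →+* B) (ι : Type) [Fintype ι] where
  π : B →+ A
  π_left : ∀ a x, π (φ a * x) = a * π x
  π_right : ∀ a x, π (x * φ a) = π x * a
  π_φ : ∀ a, π (φ a) = a
  b : ι → B
  c : ι → B
  dual1 : ∀ x, ∑ i, φ (π (x * b i)) * c i = x
  dual2 : ∀ x, ∑ i, b i * φ (π (c i * x)) = x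
  u : B
  u_comm : ∀ x, u * x = x * u
  u_sum : u * ∑ i, b i * c i = 1

namespace FrobData

variable {φ : A →+* B} {ι : Type} [Fintype ι] (F : FrobData φ ι)

include F in
lemma res_split : ∃ (i : Res φ B →ₗ[A] (ι → A)) (s : (ι → A) →ₗ[A] Res φ B),
    s ∘ₗ i = LinearMap.id := by
  refine ⟨{ toFun := fun x j => F.π ((show B from x) * F.b j)
            map_add' := ?_, map_smul' := ?_ },
          { toFun := fun f => (show Res φ B from (∑ j, φ (f j) * F.c j : B))
            map_add' := ?_, map_smul' := ?_ }, ?_⟩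
  · intro x y; funext j
    exact (congrArg F.π (add_mul (show B from x) (show B from y) (F.b j))).trans (map_add F.π _ _)
  · intro a x; funext j
    exact (congrArg F.π (mul_assoc (φ a) (show B from x) (F.b j))).trans (F.π_left _ _)
  · intro f g
    change (∑ j, φ ((f + g) j) * F.c j : B) = (∑ j, φ (f j) * F.c j : B) + (∑ j, φ (g j) * F.c j : B)
    simp [add_mul, Finset.sum_add_distrib]
  · intro a f
    change (∑ j, φ ((a • f) j) * F.c j : B) = φ a * (∑ j, φ (f j) * F.c j : B)
    simp [Finset.mul_sum, mul_assoc]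
  · ext x
    exact F.dual1 x

include F in
lemma res_B_projective : Module.Projective A (Res φ B) := by
  obtain ⟨i, s, h⟩ := F.res_split
  exact Module.Projective.of_split i s h

include F in
lemma res_B_finite : Module.Finite A (Res φ B) := by
  obtain ⟨i, s, h⟩ := F.res_split
  exact Module.Finite.of_surjective s (fun x => ⟨i x, LinearMap.congr_fun h x⟩)

include F in
lemma res_finite (M : Type) [AddCommGroup M] [Module B M] (hM : Module.Finite B M) :
    Module.Finite A (Res φ M) := by
  obtain ⟨n, f, hf⟩ := Module.Finite.exists_fin' B M
  have := F.res_B_finite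
  let g : (Fin n → Res φ B) →ₗ[A] Res φ M :=
    { toFun := fun x => f x
      map_add' := fun x y => f.map_add x y
      map_smul' := fun a x => f.map_smul (φ a) x }
  exact Module.Finite.of_surjective g hf

include F in
lemma res_projective (M : Type) [AddCommGroup M] [Module B M] (hM : Module.Projective B M) :
    Module.Projective A (Res φ M) := by
  obtain ⟨s, hs⟩ := hM
  have := F.res_B_projective
  have h2 : Module.Projective A (M →₀ Res φ B) :=
    Module.Projective.of_equiv' (finsuppLequivDFinsupp (ι := M) (M := Res φ B) A).symm
  let i : Res φ M →ₗ[A] (M →₀ Res φ B) :=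
    { toFun := fun x => s x
      map_add' := fun x y => s.map_add x y
      map_smul' := fun a x => s.map_smul (φ a) x }
  let r : (M →₀ Res φ B) →ₗ[A] Res φ M :=
    { toFun := fun x => Finsupp.linearCombination B (id : M → M) x
      map_add' := fun x y => (Finsupp.linearCombination B (id : M → M)).map_add x y
      map_smul' := fun a x => (Finsupp.linearCombination B (id : M → M)).map_smul (φ a) x }
  exact Module.Projective.of_split i r (LinearMap.ext fun x => hs x)

include F in
lemma central {M N : Type} [AddCommGroup M] [Module B M] [AddCommGroup N] [Module B N]
    (f : M →+ N) (hf : ∀ a m, f (φ a • m) = φ a • f m) (x : B) (m : M) :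
    ∑ i, F.b i • f (F.c i • x • m) = x • ∑ i, F.b i • f (F.c i • m) := by
  have h1 : ∀ i, F.b i • f (F.c i • x • m)
      = ∑ j, F.b i • φ (F.π (F.c i * x * F.b j)) • f (F.c j • m) := by
    intro i
    conv_lhs => rw [smul_smul, ← F.dual1 (F.c i * x), Finset.sum_smul, map_sum, Finset.smul_sum]
    simp only [mul_smul, hf]
  have h2 : ∀ j, x • F.b j • f (F.c j • m)
      = ∑ i, F.b i • φ (F.π (F.c i * x * F.b j)) • f (F.c j • m) := by
    intro j
    conv_lhs => rw [smul_smul, ← F.dual2 (x * F.b j), Finset.sum_smul]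
    simp only [mul_smul, mul_assoc]
  rw [Finset.smul_sum, Finset.sum_congr rfl (fun i _ => h1 i), Finset.sum_comm]
  exact (Finset.sum_congr rfl (fun i _ => h2 i)).symm

include F in
lemma projective_of_res (M : Type) [AddCommGroup M] [Module B M]
    (hM : Module.Projective A (Res φ M)) : Module.Projective B M := by
  let p := Finsupp.linearCombination B (id : M → M)
  have hp : Function.Surjective p := Finsupp.linearCombination_id_surjective B M
  obtain ⟨s, hs⟩ := LinearMap.exists_rightInverse_of_surjective (Res.map φ p)
    (LinearMap.range_eq_top.2 hp)
  let f : M →+ (M →₀ B) := { toFun := fun m => s m, map_zero' := s.map_zero, map_add' := s.map_add }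
  have hf : ∀ a m, f (φ a • m) = φ a • f m := fun a m => s.map_smul a m
  have hpf : ∀ m, p (f m) = m := fun m => LinearMap.congr_fun hs m
  let t : M →ₗ[B] (M →₀ B) :=
    { toFun := fun m => ∑ i, F.b i • f (F.c i • F.u • m)
      map_add' := fun x y => by simp [smul_add, Finset.sum_add_distrib]
      map_smul' := fun x m => by
        have : F.u • x • m = x • F.u • m := by rw [smul_smul, F.u_comm, mul_smul]
        rw [this]
        exact F.central f hf x _ }
  refine Module.Projective.of_split t p (LinearMap.ext fun m => ?_)
  change p (∑ i, F.b i • f (F.c i • F.u • m)) = m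
  simp only [map_sum, map_smul, hpf]
  simp only [smul_smul, ← mul_assoc, ← Finset.sum_smul, ← Finset.sum_mul]
  rw [← F.u_comm, F.u_sum, one_smul]

include F in
lemma PD_res (n : ℕ) : ∀ (M : Type) [AddCommGroup M] [Module B M],
    PD B n M ↔ PD A n (Res φ M) := by
  induction n with
  | zero =>
    intro M _ _
    rw [PD_zero, PD_zero]
    exact ⟨F.res_projective M, F.projective_of_res M⟩
  | succ n ih =>
    intro M _ _
    let p := Finsupp.linearCombination B (id : M → M)
    have hp : Function.Surjective p := Finsupp.linearCombination_id_surjective B M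
    rw [PD_step p hp inferInstance, ih, PD_step (Res.map φ p) hp (F.res_projective _ inferInstance)]
    let e : Res φ (LinearMap.ker p) ≃ₗ[A] LinearMap.ker (Res.map φ p) :=
      { toFun := fun x => ⟨(show LinearMap.ker p from x).1, (show LinearMap.ker p from x).2⟩
        invFun := fun x => (show LinearMap.ker p from ⟨x.1, x.2⟩)
        map_add' := fun x y => rfl
        map_smul' := fun a x => rfl
        left_inv := fun x => rfl
        right_inv := fun x => rfl }
    exact PD_equiv e

include F in
lemma exists_ind (N : Type) [AddCommGroup N] [Module A N] (hN : Module.Finite A N) :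
    ∃ (M : ModuleCat.{0} B) (_ : Module.Finite B M) (i : N →ₗ[A] Res φ M) (r : Res φ M →ₗ[A] N),
      ∀ x, r (i x) = x := by
  obtain ⟨n, f, hf⟩ := Module.Finite.exists_fin' A N
  let S : Submodule B (Fin n → B) :=
    Submodule.span B {z | ∃ y ∈ LinearMap.ker f, z = fun j => φ (y j)}
  let Pm : (Fin n → B) →+ N :=
    { toFun := fun z => f (fun j => F.π (z j))
      map_zero' := by
        have : (fun j : Fin n => F.π ((0 : Fin n → B) j)) = 0 := by funext j; simp
        rw [this, map_zero]
      map_add' := fun x y => by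
        rw [← map_add]; congr 1; funext j; simp }
  have hS : ∀ z ∈ S, ∀ b : B, Pm (b • z) = 0 := by
    intro z hz
    induction hz using Submodule.span_induction with
    | mem z hz =>
      obtain ⟨y, hy, rfl⟩ := hz
      intro b
      change f (fun j => F.π (b * φ (y j))) = 0
      have : (fun j => F.π (b * φ (y j))) = F.π b • y := by funext j; simp [F.π_right]
      rw [this, map_smul, hy, smul_zero]
    | zero => intro b; simp
    | add x y _ _ hx hy => intro b; rw [smul_add, map_add, hx, hy, add_zero]
    | smul c x _ hx => intro b; rw [smul_smul]; exact hx _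
  have hS' : S.toAddSubgroup ≤ Pm.ker := fun z hz => by
    have := hS z hz 1
    rwa [one_smul] at this
  let r0 : ((Fin n → B) ⧸ S) →+ N := QuotientAddGroup.lift S.toAddSubgroup Pm hS'
  have hr0 : ∀ z, r0 (S.mkQ z) = Pm z := fun z => rfl
  let r : Res φ ((Fin n → B) ⧸ S) →ₗ[A] N :=
    { toFun := fun x => r0 x
      map_add' := fun x y => r0.map_add x y
      map_smul' := fun a x => by
        obtain ⟨z, rfl⟩ := S.mkQ_surjective x
        change r0 (φ a • S.mkQ z) = a • r0 (S.mkQ z)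
        rw [← map_smul, hr0, hr0]
        change f (fun j => F.π (φ a * z j)) = a • f (fun j => F.π (z j))
        rw [← map_smul]; congr 1; funext j; simp [F.π_left] }
  let i0 : (Fin n → A) →ₗ[A] Res φ ((Fin n → B) ⧸ S) :=
    { toFun := fun y => S.mkQ (fun j => φ (y j))
      map_add' := fun x y => by
        refine Eq.trans ?_ (S.mkQ.map_add _ _)
        congr 1; funext j; simp
      map_smul' := fun a x => by
        refine Eq.trans ?_ (S.mkQ.map_smul (φ a) _)
        congr 1; funext j; simp }
  have hi0 : LinearMap.ker f ≤ LinearMap.ker i0 := by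
    intro y hy
    change S.mkQ (fun j => φ (y j)) = 0
    rw [Submodule.mkQ_apply, Submodule.Quotient.mk_eq_zero]
    exact Submodule.subset_span ⟨y, hy, rfl⟩
  let i : N →ₗ[A] Res φ ((Fin n → B) ⧸ S) :=
    (LinearMap.ker f).liftQ i0 hi0 ∘ₗ (f.quotKerEquivOfSurjective hf).symm.toLinearMap
  refine ⟨ModuleCat.of B ((Fin n → B) ⧸ S), inferInstanceAs (Module.Finite B ((Fin n → B) ⧸ S)),
    i, r, ?_⟩
  intro x
  obtain ⟨y, rfl⟩ := hf x
  have h1 : (f.quotKerEquivOfSurjective hf).symm (f y) = (LinearMap.ker f).mkQ y := by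
    rw [LinearEquiv.symm_apply_eq]; rfl
  have h2 : i (f y) = i0 y := by
    change (LinearMap.ker f).liftQ i0 hi0 ((f.quotKerEquivOfSurjective hf).symm (f y)) = _
    rw [h1]; rfl
  rw [h2]
  change f (fun j => F.π (φ (y j))) = f y
  simp only [F.π_φ]

include F in
lemma globalDim_eq : globalDim B = globalDim A := by
  unfold globalDim
  congr 1
  ext c
  refine exists_congr fun n => and_congr_right fun _ => ⟨fun h N _ _ hN => ?_, fun h M _ _ hM => ?_⟩
  · obtain ⟨M, hM, i, r, hr⟩ := F.exists_ind N hN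
    exact projDimLE_of n _ (PD_retract i r hr ((F.PD_res n M).1 (projDimLE_to n _ (h M hM))))
  · exact projDimLE_of n _ ((F.PD_res n M).2 (projDimLE_to n _ (h _ (F.res_finite M hM))))

end FrobData

end Frob

namespace SGA

section Main

variable {k : Type} [CommRing k] {Λ : Type} [Ring Λ] [Algebra k Λ]
variable {G : Type} [Group G] [Fintype G] (σ : G →* (Λ ≃ₐ[k] Λ))

/-- The group element `1 ⊗ g`. -/
def delta (g : G) : SGA σ := ⟨fun x => if x = g then 1 else 0⟩

variable {σ}

lemma mul_delta (x : SGA σ) (g y : G) : (x * delta σ g).toFun y = x.toFun (y * g⁻¹) := by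
  rw [toFun_mul, Finset.sum_eq_single (y * g⁻¹)]
  · simp [delta]
  · intro b _ hb
    have : ¬ b⁻¹ * y = g := by
      rintro rfl; apply hb; group
    simp [delta, this]
  · simp

lemma delta_mul (x : SGA σ) (g y : G) : (delta σ g * x).toFun y = σ g (x.toFun (g⁻¹ * y)) := by
  rw [toFun_mul, Finset.sum_eq_single g]
  · simp [delta]
  · intro b _ hb
    simp [delta, hb]
  · simp

lemma delta_mul_delta (g h : G) : delta σ g * delta σ h = delta σ (g * h) := by
  ext y
  rw [mul_delta]
  simp [delta, mul_inv_eq_iff_eq_mul]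

lemma delta_one : delta σ 1 = 1 := rfl

lemma subEmb_apply (H : Subgroup G) [Fintype H] (a : SGA (σ.comp H.subtype)) (g : G) :
    (subEmb σ H a).toFun g = if hg : g ∈ H then a.toFun ⟨g, hg⟩ else 0 := rfl

/-- The projection `ΛG → ΛH`. -/
def proj (σ : G →* (Λ ≃ₐ[k] Λ)) (H : Subgroup G) [Fintype H] :
    SGA σ →+ SGA (σ.comp H.subtype) where
  toFun x := ⟨fun h => x.toFun h⟩
  map_zero' := rfl
  map_add' _ _ := rfl

lemma proj_apply (H : Subgroup G) [Fintype H] (x : SGA σ) (h : H) :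
    (proj σ H x).toFun h = x.toFun h := rfl

lemma sum_sub (H : Subgroup G) [Fintype H] (f : G → Λ) (hf : ∀ g, g ∉ H → f g = 0) :
    ∑ g : G, f g = ∑ h : H, f h := by
  rw [← Finset.sum_subtype (p := (· ∈ H)) (Finset.univ.filter (· ∈ H)) (by simp) f]
  symm
  apply Finset.sum_subset (Finset.subset_univ _)
  intro x _ hx
  exact hf x (by simpa using hx)

/-- The Frobenius data of `ΛH ⊆ ΛG`. -/
def frob (σ : G →* (Λ ≃ₐ[k] Λ)) (H : Subgroup G) [Fintype H] (hind : IsUnit ((H.index : k))) :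
    FrobData (subEmb σ H) (G ⧸ H) where
  π := proj σ H
  π_left a x := by
    ext h
    rw [proj_apply, toFun_mul, toFun_mul, sum_sub H]
    · refine Finset.sum_congr rfl fun g _ => ?_
      rw [subEmb_apply, dif_pos g.2, proj_apply]
      rfl
    · intro g hg
      rw [subEmb_apply, dif_neg hg, zero_mul]
  π_right a x := by
    ext h
    rw [proj_apply, toFun_mul, toFun_mul, sum_sub H]
    · refine Finset.sum_congr rfl fun g _ => ?_
      rw [subEmb_apply, dif_pos (H.mul_mem (H.inv_mem g.2) h.2), proj_apply]
      rfl
    · intro g hg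
      rw [subEmb_apply, dif_neg, map_zero, mul_zero]
      intro hc
      apply hg
      have := H.mul_mem h.2 (H.inv_mem hc)
      simpa using this
  π_φ a := by
    ext h
    rw [proj_apply, subEmb_apply, dif_pos h.2]
  b q := delta σ q.out
  c q := delta σ (q.out)⁻¹
  dual1 x := by
    ext y
    have hsum : ∀ (f : G ⧸ H → SGA σ), (∑ q, f q).toFun y = ∑ q, (f q).toFun y := fun f =>
      map_sum (⟨⟨fun x : SGA σ => x.toFun y, rfl⟩, fun _ _ => rfl⟩ : SGA σ →+ Λ) f _
    rw [hsum, Finset.sum_eq_single (QuotientGroup.mk y⁻¹ : G ⧸ H)]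
    · have hy : y * (Quotient.out (QuotientGroup.mk y⁻¹ : G ⧸ H)) ∈ H := by
        have := (QuotientGroup.eq (s := H) (a := y⁻¹)
          (b := (Quotient.out (QuotientGroup.mk y⁻¹ : G ⧸ H)))).1 (Quotient.out_eq' _).symm
        simpa using this
      rw [mul_delta, inv_inv, subEmb_apply, dif_pos hy, proj_apply, mul_delta]
      simp
    · intro q _ hq
      rw [mul_delta, inv_inv, subEmb_apply, dif_neg]
      intro hc
      apply hq
      rw [← Quotient.out_eq' q]
      symm
      apply (QuotientGroup.eq (s := H)).2
      simpa using hc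
    · simp
  dual2 x := by
    ext y
    have hsum : ∀ (f : G ⧸ H → SGA σ), (∑ q, f q).toFun y = ∑ q, (f q).toFun y := fun f =>
      map_sum (⟨⟨fun x : SGA σ => x.toFun y, rfl⟩, fun _ _ => rfl⟩ : SGA σ →+ Λ) f _
    rw [hsum, Finset.sum_eq_single (QuotientGroup.mk y : G ⧸ H)]
    · have hy : (Quotient.out (QuotientGroup.mk y : G ⧸ H))⁻¹ * y ∈ H :=
        (QuotientGroup.eq (s := H)).1 (Quotient.out_eq' _)
      rw [delta_mul, subEmb_apply, dif_pos hy, proj_apply, delta_mul, ← AlgEquiv.mul_apply,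
        ← map_mul]
      simp
    · intro q _ hq
      rw [delta_mul, subEmb_apply, dif_neg, map_zero]
      intro hc
      apply hq
      rw [← Quotient.out_eq' q]
      exact (QuotientGroup.eq (s := H)).2 hc
    · simp
  u := emb σ (algebraMap k Λ (hind.unit⁻¹ : kˣ))
  u_comm x := by
    have h1 : (emb σ (algebraMap k Λ (hind.unit⁻¹ : kˣ))) * (H.index : SGA σ) = 1 := by
      rw [← map_natCast (emb σ), ← map_mul, ← map_natCast (algebraMap k Λ), ← map_mul]
      simp
    have h2 : (H.index : SGA σ) * (emb σ (algebraMap k Λ (hind.unit⁻¹ : kˣ))) = 1 := by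
      rw [(Nat.cast_commute _ _).eq, h1]
    exact ((Nat.cast_commute H.index x).units_inv_left
      (u := ⟨(H.index : SGA σ), _, h2, h1⟩)).eq
  u_sum := by
    simp only [delta_mul_delta, mul_inv_cancel, delta_one]
    rw [Finset.sum_const, Finset.card_univ, ← Nat.card_eq_fintype_card, nsmul_one]
    change _ * (H.index : SGA σ) = 1
    rw [← map_natCast (emb σ), ← map_mul, ← map_natCast (algebraMap k Λ), ← map_mul]
    simp

end Main

end SGA

/-- Let `H ≤ G` be a subgroup with `|G:H|` invertible in `k`. Then a finitely
generated `ΛG`-module `M` is projective iff its restriction to `ΛH` is projective; consequently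
`ΛG` and `ΛH` have equal global dimension. -/
theorem skew_group_algebra_projective_restriction
    (k : Type) [Field k] [IsAlgClosed k] (p : ℕ) [CharP k p]
    (Λ : Type) [Ring Λ] [Algebra k Λ] [FiniteDimensional k Λ]
    (hconn : IsConnectedRing Λ) (hbasic : IsBasicRing Λ)
    (G : Type) [Group G] [Fintype G] (σ : G →* (Λ ≃ₐ[k] Λ))
    (H : Subgroup G) [Fintype H] (hind : IsUnit ((H.index : k))) :
    (∀ (M : Type) [AddCommGroup M] [Module (SGA σ) M], Module.Finite (SGA σ) M →
      (Module.Projective (SGA σ) M ↔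
        Module.Projective (SGA (σ.comp H.subtype)) (Res (SGA.subEmb σ H) M))) ∧
    globalDim (SGA σ) = globalDim (SGA (σ.comp H.subtype)) := by
  have F := SGA.frob σ H hind
  exact ⟨fun M _ _ _ => ⟨F.res_projective M, F.projective_of_res M⟩, F.globalDim_eq⟩
end
end

section
/- Let S be a finite group acting on Λ by algebra automorphisms and E = {e_1,...,e_n} a complete set of primitive orthogonal idempotents of Λ closed under the action of S. Let {e_1,...,e_s} be a set of representatives of the S-orbits on E and set ε = e_1 + ... + e_s. Then the skew group algebra ΛS is Morita equivalent to the algebra ε(ΛS)ε. -/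
set_option maxHeartbeats 1000000
set_option linter.unusedSectionVars false
set_option linter.unusedVariables false

noncomputable section
open Finset
open scoped Classical


section CornerRing

/-- The corner ring `εAε` associated to an idempotent `ε` of a ring `A`. -/
def Corner {A : Type} [Ring A] {ε : A} (hε : IsIdempotentElem ε) : Type :=
  {x : A // ε * x = x ∧ x * ε = x}

namespace Corner

variable {A : Type} [Ring A] {ε : A} (hε : IsIdempotentElem ε)

instance : Ring (Corner hε) where
  add x y := ⟨x.1 + y.1, by rw [mul_add, x.2.1, y.2.1], by rw [add_mul, x.2.2, y.2.2]⟩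
  add_assoc a b c := Subtype.ext (add_assoc _ _ _)
  zero := ⟨0, by simp, by simp⟩
  zero_add a := Subtype.ext (zero_add _)
  add_zero a := Subtype.ext (add_zero _)
  add_comm a b := Subtype.ext (add_comm _ _)
  mul x y := ⟨x.1 * y.1, by rw [← mul_assoc, x.2.1], by rw [mul_assoc, y.2.2]⟩
  left_distrib a b c := Subtype.ext (mul_add _ _ _)
  right_distrib a b c := Subtype.ext (add_mul _ _ _)
  zero_mul a := Subtype.ext (zero_mul _)
  mul_zero a := Subtype.ext (mul_zero _)
  mul_assoc a b c := Subtype.ext (mul_assoc _ _ _)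
  one := ⟨ε, hε, hε⟩
  one_mul a := Subtype.ext a.2.1
  mul_one a := Subtype.ext a.2.2
  neg x := ⟨-x.1, by rw [mul_neg, x.2.1], by rw [neg_mul, x.2.2]⟩
  neg_add_cancel a := Subtype.ext (neg_add_cancel _)
  nsmul n x := ⟨n • x.1, by rw [mul_smul_comm, x.2.1], by rw [smul_mul_assoc, x.2.2]⟩
  nsmul_zero x := Subtype.ext (zero_nsmul _)
  nsmul_succ n x := Subtype.ext (succ_nsmul _ _)
  zsmul n x := ⟨n • x.1, by rw [mul_smul_comm, x.2.1], by rw [smul_mul_assoc, x.2.2]⟩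
  zsmul_zero' x := Subtype.ext (zero_zsmul _)
  zsmul_succ' n x := Subtype.ext (by
    show ((Int.ofNat n.succ) • x.1 : A) = (Int.ofNat n) • x.1 + x.1
    have : (Int.ofNat n.succ) = Int.ofNat n + 1 := rfl
    rw [this, add_zsmul, one_zsmul])
  zsmul_neg' n x := Subtype.ext (by
    show ((Int.negSucc n) • x.1 : A) = -(((n.succ : ℤ)) • x.1)
    rw [negSucc_zsmul]
    simp)

end Corner

end CornerRing
section MoritaCornerProof

open CategoryTheory

/-- The additive subgroup `εM` of a module `M`. -/
def fixedSub {A : Type} [Ring A] (ε : A) (M : Type) [AddCommGroup M] [Module A M] :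
    AddSubgroup M where
  carrier := {m | ε • m = m}
  add_mem' {a b} ha hb := by
    show ε • (a + b) = a + b
    rw [smul_add, show ε • a = a from ha, show ε • b = b from hb]
  zero_mem' := smul_zero _
  neg_mem' {a} ha := by
    show ε • (-a) = -a
    rw [smul_neg, show ε • a = a from ha]

variable {A : Type} [Ring A] {ε : A} (hε : IsIdempotentElem ε)

lemma corner_val_mul (x y : Corner hε) : (x * y).1 = x.1 * y.1 := rfl
lemma corner_val_add (x y : Corner hε) : (x + y).1 = x.1 + y.1 := rfl
lemma corner_val_one : (1 : Corner hε).1 = ε := rfl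
lemma corner_val_zero : (0 : Corner hε).1 = 0 := rfl

/-- The submodule `εM` is a module over the corner ring. -/
instance fixedModule (M : Type) [AddCommGroup M] [Module A M] :
    Module (Corner hε) (fixedSub ε M) where
  smul x m := ⟨x.1 • m.1, by
    show ε • (x.1 • m.1) = x.1 • m.1
    rw [smul_smul, x.2.1]⟩
  one_smul m := Subtype.ext m.2
  mul_smul x y m := Subtype.ext (mul_smul x.1 y.1 m.1)
  smul_zero x := Subtype.ext (smul_zero x.1)
  smul_add x m m' := Subtype.ext (smul_add x.1 m.1 m'.1)
  add_smul x y m := Subtype.ext (add_smul x.1 y.1 m.1)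
  zero_smul m := Subtype.ext (zero_smul A m.1)

lemma fixed_val_smul {M : Type} [AddCommGroup M] [Module A M] (x : Corner hε)
    (m : fixedSub ε M) : (x • m).1 = x.1 • m.1 := rfl

/-- Restriction of a linear map to `εM → εN`. -/
def fixedMap {M N : Type} [AddCommGroup M] [Module A M] [AddCommGroup N] [Module A N]
    (f : M →ₗ[A] N) : fixedSub ε M →ₗ[Corner hε] fixedSub ε N where
  toFun m := ⟨f m.1, by
    show ε • f m.1 = f m.1
    rw [← map_smul, show ε • m.1 = m.1 from m.2]⟩
  map_add' m m' := Subtype.ext (map_add f m.1 m'.1)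
  map_smul' x m := Subtype.ext (map_smul f x.1 m.1)

/-- The functor `M ↦ εM`. -/
def fixedFunctor : ModuleCat.{0} A ⥤ ModuleCat.{0} (Corner hε) where
  obj M := ModuleCat.of (Corner hε) (fixedSub ε M)
  map f := ModuleCat.ofHom (fixedMap hε f.hom)
  map_id M := rfl
  map_comp f g := rfl

/-- `ε m` as an element of `εM`. -/
def toFixed {M : Type} [AddCommGroup M] [Module A M] (m : M) : fixedSub ε M :=
  ⟨ε • m, by
    show ε • ε • m = ε • m
    rw [smul_smul, hε.eq]⟩

/-- `ε x ε` as an element of the corner. -/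
def toCorner (x : A) : Corner hε :=
  ⟨ε * x * ε, by rw [← mul_assoc, ← mul_assoc, hε.eq], by rw [mul_assoc, hε.eq]⟩

lemma toFixed_add {M : Type} [AddCommGroup M] [Module A M] (m m' : M) :
    toFixed hε (m + m') = toFixed hε m + toFixed hε m' := Subtype.ext (smul_add _ _ _)

lemma toFixed_sum {M : Type} [AddCommGroup M] [Module A M] {ι : Type} [Fintype ι] (m : ι → M) :
    toFixed hε (∑ i, m i) = ∑ i, toFixed hε (m i) :=
  map_sum (AddMonoidHom.mk' (toFixed hε (M := M)) (toFixed_add hε)) m Finset.univ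

variable {ι : Type} [Fintype ι] (a b : ι → A)

lemma expand (hab : ∑ i, a i * ε * b i = 1) {M : Type} [AddCommGroup M] [Module A M] (m : M) :
    ∑ i, a i • ε • b i • m = m := by
  simp only [smul_smul, ← Finset.sum_smul, ← mul_assoc]
  rw [hab, one_smul]

/-- Extension of a corner-linear map `εM → εN` to a linear map `M → N`. -/
def extendMap (hab : ∑ i, a i * ε * b i = 1) {M N : Type} [AddCommGroup M] [Module A M] [AddCommGroup N] [Module A N]
    (φ : fixedSub ε M →ₗ[Corner hε] fixedSub ε N) : M →ₗ[A] N where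
  toFun m := ∑ i, a i • (φ (toFixed hε (b i • m))).1
  map_add' m m' := by
    simp only [smul_add, toFixed_add, map_add, AddSubgroup.coe_add, Finset.sum_add_distrib]
  map_smul' x m := by
    have key : ∀ i, (φ (toFixed hε (b i • x • m))).1
        = ε • b i • x • ∑ j, a j • (φ (toFixed hε (b j • m))).1 := by
      intro i
      have h1 : toFixed hε (b i • x • m)
          = ∑ j, toCorner hε (b i * x * a j) • toFixed hε (b j • m) := by
        conv_lhs => rw [← expand a b hab m]
        simp only [Finset.smul_sum]
        rw [toFixed_sum]
        refine Finset.sum_congr rfl fun j _ => Subtype.ext ?_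
        rw [fixed_val_smul]
        simp only [toFixed, toCorner, smul_smul, mul_assoc]
        rw [← mul_assoc ε ε (b j), hε.eq]
      rw [h1, map_sum, AddSubgroup.val_finsetSum]
      simp only [Finset.smul_sum]
      refine Finset.sum_congr rfl fun j _ => ?_
      rw [map_smul, fixed_val_smul]
      have h2 : ε • (φ (toFixed hε (b j • m))).1 = (φ (toFixed hε (b j • m))).1 :=
        (φ (toFixed hε (b j • m))).2
      conv_rhs => rw [← h2]
      simp only [toCorner, smul_smul, mul_assoc]
    simp only [key]
    rw [expand a b hab, RingHom.id_apply]

lemma extendMap_apply (hab : ∑ i, a i * ε * b i = 1) {M N : Type} [AddCommGroup M] [Module A M] [AddCommGroup N] [Module A N]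
    (φ : fixedSub ε M →ₗ[Corner hε] fixedSub ε N) (m : fixedSub ε M) :
    extendMap hε a b hab φ m.1 = (φ m).1 := by
  show ∑ i, a i • (φ (toFixed hε (b i • m.1))).1 = (φ m).1
  conv_rhs => rw [← expand a b hab (φ m).1]
  refine Finset.sum_congr rfl fun i _ => ?_
  have h1 : toFixed hε (b i • m.1) = toCorner hε (b i) • m := by
    refine Subtype.ext ?_
    rw [fixed_val_smul]
    show ε • b i • m.1 = (ε * b i * ε) • m.1
    rw [mul_smul, mul_smul, show ε • m.1 = m.1 from m.2]
  rw [h1, map_smul]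
  refine congrArg (a i • ·) ?_
  show (ε * b i * ε) • (φ m).1 = _
  rw [mul_smul, mul_smul, show ε • (φ m).1 = (φ m).1 from (φ m).2]

lemma fixed_full (hab : ∑ i, a i * ε * b i = 1) : (fixedFunctor hε).Full where
  map_surjective {M N} φ := by
    refine ⟨ModuleCat.ofHom (extendMap hε a b hab φ.hom), ?_⟩
    ext m
    exact Subtype.ext (extendMap_apply hε a b hab φ.hom m)

lemma fixed_faithful (hab : ∑ i, a i * ε * b i = 1) : (fixedFunctor hε).Faithful where
  map_injective {M N} f g h := by
    ext m
    have h1 : ∀ x : M, f.hom (ε • x) = g.hom (ε • x) := fun x =>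
      congrArg (fun t => (t.hom (toFixed hε x)).1) h
    rw [← expand a b hab m]
    rw [map_sum, map_sum]
    refine Finset.sum_congr rfl fun i _ => ?_
    rw [map_smul f.hom (a i), map_smul g.hom (a i), h1]

/-- The `(εAε, A)`-bimodule `εA`, realised as `ε` fixed elements of the left module `A`. -/
abbrev epsA (ε : A) : Type := fixedSub ε A

/-- Right multiplication on `εA`. -/
def rightMul (x : A) : epsA ε →ₗ[Corner hε] epsA ε where
  toFun y := ⟨y.1 * x, by
    show ε * (y.1 * x) = y.1 * x
    rw [← mul_assoc, show ε * y.1 = y.1 from y.2]⟩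
  map_add' y z := Subtype.ext (add_mul _ _ _)
  map_smul' c y := Subtype.ext (mul_assoc _ _ _)

/-- The coinduced module. -/
def Coind (N : Type) [AddCommGroup N] [Module (Corner hε) N] : Type :=
  epsA ε →ₗ[Corner hε] N

/-- Evaluation. -/
def cev {N : Type} [AddCommGroup N] [Module (Corner hε) N] (f : Coind hε N) (y : epsA ε) : N :=
  DFunLike.coe (F := epsA ε →ₗ[Corner hε] N) f y

instance (N : Type) [AddCommGroup N] [Module (Corner hε) N] : AddCommGroup (Coind hε N) :=
  inferInstanceAs (AddCommGroup (epsA ε →ₗ[Corner hε] N))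

instance coindModule (N : Type) [AddCommGroup N] [Module (Corner hε) N] :
    Module A (Coind hε N) where
  smul x f := LinearMap.comp (f : epsA ε →ₗ[Corner hε] N) (rightMul hε x)
  one_smul f := LinearMap.ext fun y => congrArg (fun t => cev hε f t)
    (Subtype.ext (mul_one y.1))
  mul_smul x y f := LinearMap.ext fun z => congrArg (fun t => cev hε f t)
    (Subtype.ext (mul_assoc z.1 x y).symm)
  smul_zero x := rfl
  smul_add x f g := rfl
  add_smul x y f := LinearMap.ext fun z => by
    refine Eq.trans (congrArg (fun t => cev hε f t) ?_)
      (LinearMap.map_add f (rightMul hε x z) (rightMul hε y z))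
    exact Subtype.ext (mul_add z.1 x y)
  zero_smul f := LinearMap.ext fun z => by
    refine Eq.trans (congrArg (fun t => cev hε f t) ?_) (LinearMap.map_zero f)
    exact Subtype.ext (mul_zero z.1)

/-- `ε` as an element of `εA`. -/
def epsElt : epsA ε := ⟨ε, hε⟩

/-- `y ε` as a corner element for `y ∈ εA`. -/
def mulEps (y : epsA ε) : Corner hε :=
  ⟨y.1 * ε, by rw [← mul_assoc, show ε * y.1 = y.1 from y.2], by rw [mul_assoc, hε.eq]⟩

/-- `ε Hom(εA, N) ≅ N`. -/
def coindEquiv (N : Type) [AddCommGroup N] [Module (Corner hε) N] :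
    fixedSub ε (Coind hε N) ≃ₗ[Corner hε] N where
  toFun f := cev hε f.1 (epsElt hε)
  map_add' f g := rfl
  map_smul' c f := by
    show cev hε f.1 (rightMul hε c.1 (epsElt hε)) = c • cev hε f.1 (epsElt hε)
    refine Eq.trans (congrArg (fun t => cev hε f.1 t) ?_)
      (LinearMap.map_smul f.1 c (epsElt hε))
    refine Subtype.ext ?_
    show ε * c.1 = c.1 * ε
    rw [c.2.1, c.2.2]
  invFun n := ⟨({ toFun := fun y => mulEps hε y • n
                  map_add' := fun y z => by
                    rw [← add_smul]
                    exact congrArg (· • n) (Subtype.ext (add_mul _ _ _))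
                  map_smul' := fun c y => by
                    rw [RingHom.id_apply, smul_smul]
                    exact congrArg (· • n) (Subtype.ext (mul_assoc _ _ _)) } :
                  epsA ε →ₗ[Corner hε] N), by
      refine LinearMap.ext fun y => ?_
      show mulEps hε (rightMul hε ε y) • n = mulEps hε y • n
      refine congrArg (· • n) (Subtype.ext ?_)
      show y.1 * ε * ε = y.1 * ε
      rw [mul_assoc, hε.eq]⟩
  left_inv f := by
    refine Subtype.ext (LinearMap.ext fun y => ?_)
    show mulEps hε y • cev hε f.1 (epsElt hε) = cev hε f.1 y
    refine (LinearMap.map_smul f.1 (mulEps hε y) (epsElt hε)).symm.trans ?_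
    have h : cev hε (ε • f.1) y = cev hε f.1 y :=
      congrArg (fun t : Coind hε N => cev hε t y) f.2
    refine Eq.trans ?_ h
    refine congrArg (fun t => cev hε f.1 t) (Subtype.ext ?_)
    show y.1 * ε * ε = y.1 * ε
    rw [mul_assoc, hε.eq]
  right_inv n := by
    show mulEps hε (epsElt hε) • n = n
    have : mulEps hε (epsElt hε) = 1 := Subtype.ext hε
    rw [this, one_smul]

lemma fixed_essSurj : (fixedFunctor hε).EssSurj where
  mem_essImage N := ⟨ModuleCat.of A (Coind hε N), ⟨(coindEquiv hε N).toModuleIso⟩⟩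

lemma morita_of_full (hab : ∑ i, a i * ε * b i = 1) : MoritaEquivalent A (Corner hε) := by
  have := fixed_full hε a b hab
  have := fixed_faithful hε a b hab
  have := fixed_essSurj hε
  have : (fixedFunctor hε).IsEquivalence := {}
  exact ⟨(fixedFunctor hε).asEquivalence⟩

end MoritaCornerProof

section SGAProof

variable {k : Type} [CommRing k] {Λ : Type} [Ring Λ] [Algebra k Λ]
variable {G : Type} [Group G] [Fintype G]

/-- The element `x ⊗ g`. -/
def sgaSingle (σ : G →* (Λ ≃ₐ[k] Λ)) (x : Λ) (g : G) : SGA σ :=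
  ⟨fun h => if h = g then x else 0⟩

lemma sgaSingle_mul (σ : G →* (Λ ≃ₐ[k] Λ)) (x y : Λ) (g h : G) :
    sgaSingle σ x g * sgaSingle σ y h = sgaSingle σ (x * σ g y) (g * h) := by
  ext z
  rw [SGA.toFun_mul, Finset.sum_eq_single g]
  · by_cases hz : z = g * h
    · simp [sgaSingle, hz]
    · have : ¬ g⁻¹ * z = h := fun hc => hz (by rw [← hc]; group)
      simp [sgaSingle, hz, this]
  · intro c _ hc
    simp [sgaSingle, hc]
  · simp

lemma emb_eq_single (σ : G →* (Λ ≃ₐ[k] Λ)) (x : Λ) : SGA.emb σ x = sgaSingle σ x 1 := rfl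

end SGAProof

/-- Let `S` be a finite group acting on `Λ`, `E = {e_1, ..., e_n}` a complete
set of primitive orthogonal idempotents of `Λ` closed under the action of `S`, and let
`ε = e_1 + ... + e_s` be the sum of a set of representatives of the `S`-orbits on `E`.
Then `ΛS` is Morita equivalent to `ε(ΛS)ε`. -/
theorem skew_group_algebra_morita_corner
    (k : Type) [Field k] [IsAlgClosed k] (p : ℕ) [CharP k p]
    (Λ : Type) [Ring Λ] [Algebra k Λ] [FiniteDimensional k Λ]
    (hconn : IsConnectedRing Λ) (hbasic : IsBasicRing Λ)
    (S : Type) [Group S] [Fintype S]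
    (σ : S →* (Λ ≃ₐ[k] Λ))
    (n : ℕ) (e : Fin n → Λ)
    (hE : IsCompletePrimitiveOrthogonalSystem Λ e)
    (hclosed : ∀ (g : S) (i : Fin n), ∃ j : Fin n, σ g (e i) = e j)
    (s : ℕ) (r : Fin s → Fin n)
    (hrep : ∀ i : Fin n, ∃ (g : S) (j : Fin s), σ g (e i) = e (r j))
    (hdistinct : ∀ j j' : Fin s, j ≠ j' → ∀ g : S, σ g (e (r j)) ≠ e (r j'))
    (hε : IsIdempotentElem (∑ j, SGA.emb σ (e (r j)))) :
    MoritaEquivalent (SGA σ) (Corner hε) := by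
  have hinj : ∀ j j' : Fin s, j ≠ j' → r j ≠ r j' := by
    intro j j' h hr
    refine hdistinct j j' h 1 ?_
    rw [map_one, hr]; rfl
  have hmul : ∀ j : Fin s, (∑ j', SGA.emb σ (e (r j'))) * SGA.emb σ (e (r j))
      = SGA.emb σ (e (r j)) := by
    intro j
    rw [Finset.sum_mul, Finset.sum_eq_single j]
    · rw [← map_mul, (hE.1 (r j)).1.eq]
    · intro j' _ hj
      rw [← map_mul, hE.2.1 _ _ (hinj j' j hj), map_zero]
    · simp
  choose g j hgj using hrep
  refine morita_of_full hε
    (fun i => sgaSingle σ 1 (g i)⁻¹ * SGA.emb σ (e (r (j i))))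
    (fun i => SGA.emb σ (e (r (j i))) * sgaSingle σ 1 (g i)) ?_
  have h1 : (1 : SGA σ) = ∑ i, SGA.emb σ (e i) := by
    rw [← map_sum, hE.2.2, map_one]
  rw [h1]
  refine Finset.sum_congr rfl fun i _ => ?_
  rw [mul_assoc, ← mul_assoc (∑ j', SGA.emb σ (e (r j'))), hmul, mul_assoc,
    ← mul_assoc (SGA.emb σ (e (r (j i)))), ← map_mul, (hE.1 (r (j i))).1.eq,
    emb_eq_single, emb_eq_single, sgaSingle_mul, sgaSingle_mul, ← hgj i]
  have h2 : σ (g i)⁻¹ (σ (g i) (e i)) = e i := by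
    rw [← AlgEquiv.mul_apply, ← map_mul, inv_mul_cancel, map_one]; rfl
  rw [one_mul, map_mul, h2, map_one, map_one, mul_one, one_mul, inv_mul_cancel]
end
end

section
/- Let S be a finite p-group acting on Λ by algebra automorphisms, where p = char k, and E = {e_1,...,e_n} a complete set of primitive orthogonal idempotents of Λ closed under the action of S, and suppose S acts freely on E. Then for every i ≥ 1, the i-th power of the Jacobson radical of the skew group algebra ΛS equals 𝔯^i ⊗_k kS, where 𝔯 is the Jacobson radical of Λ. -/
set_option maxHeartbeats 1000000
set_option linter.unusedSectionVars false
set_option linter.unusedVariables false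

noncomputable section
open Finset
open scoped Classical


section Helpers

open Polynomial in
lemma aux_fitting {k Λ : Type} [Field k] [Ring Λ] [Algebra k Λ] [FiniteDimensional k Λ] (z : Λ) :
    ∃ (m : ℕ) (u : Λ), Commute z u ∧ z ^ (m + 1) = u * z ^ (m + 1) * z ^ (m + 1) := by
  have hint : IsIntegral k z := Algebra.IsIntegral.isIntegral z
  obtain ⟨q, hq, hnd⟩ := (minpoly k z).exists_eq_pow_rootMultiplicity_mul_and_not_dvd
    (minpoly.ne_zero hint) 0
  set m := (minpoly k z).rootMultiplicity 0
  simp only [map_zero, sub_zero] at hq hnd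
  have hcop : IsCoprime ((X : k[X]) ^ (m + 1)) q :=
    ((Polynomial.irreducible_X).coprime_iff_not_dvd.2 hnd).pow_left
  obtain ⟨a, b, hab⟩ := hcop
  refine ⟨m, aeval z a, ?_, ?_⟩
  · have : Commute (aeval z (X : k[X])) (aeval z a) := by
      unfold Commute SemiconjBy
      rw [← map_mul, ← map_mul, mul_comm]
    simpa using this
  · have h0 : aeval z (X ^ m * q) = 0 := by rw [← hq]; exact minpoly.aeval k z
    have h1 : (X : k[X]) ^ (m + 1) = a * X ^ (m + 1) * X ^ (m + 1) + b * X * (X ^ m * q) := by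
      calc (X : k[X]) ^ (m + 1) = (a * X ^ (m + 1) + b * q) * X ^ (m + 1) := by rw [hab, one_mul]
        _ = _ := by ring
    have h2 := congrArg (aeval z) h1
    rw [map_add, map_mul _ (b * X), h0] at h2
    simpa using h2

/-- Fitting's lemma for the corner ring of a primitive idempotent. -/
lemma aux_corner {k Λ : Type} [Field k] [Ring Λ] [Algebra k Λ] [FiniteDimensional k Λ]
    {e z : Λ} (he : IsPrimitiveIdempotent Λ e) (h1 : e * z = z) (h2 : z * e = z) :
    (∃ N : ℕ, z ^ N = 0) ∨ ∃ w, w * z = e := by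
  obtain ⟨m, u, hc, hz⟩ := aux_fitting (k := k) z
  obtain ⟨hid, hne, hprim⟩ := he
  set t := z ^ (m + 1) with ht
  have hct : t * u = u * t := (hc.pow_left (m + 1)).eq
  have het : e * t = t := by rw [ht, pow_succ', ← mul_assoc, h1]
  have hte : t * e = t := by rw [ht, pow_succ, mul_assoc, h2]
  have hg : u * t * (u * t) = u * t := by
    calc u * t * (u * t) = u * (t * u) * t := by noncomm_ring
      _ = u * (u * t * t) := by rw [hct]; noncomm_ring
      _ = u * t := by rw [← hz]
  have heg : e * (u * t) = u * t := by rw [← hct, ← mul_assoc, het]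
  have hge : (u * t) * e = u * t := by rw [mul_assoc, hte]
  have hid' : e * e = e := hid
  rcases hprim (u * t) (e - u * t) hg
    (by show (e - u * t) * (e - u * t) = e - u * t
        rw [sub_mul, mul_sub, mul_sub, hid', heg, hge, hg]; simp)
    (by rw [mul_sub, hge, hg, sub_self]) (by rw [sub_mul, heg, hg, sub_self]) (by simp) with h | h
  · left; exact ⟨m + 1, by rw [← ht, hz, h, zero_mul]⟩
  · right; refine ⟨u * z ^ m, ?_⟩
    rw [mul_assoc, ← pow_succ, ← ht]; exact (sub_eq_zero.1 h).symm

lemma aux_mem_jac {A : Type} [Ring A] {x : A} (h : ∀ y, ∃ N : ℕ, (y * x) ^ N = 0) :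
    x ∈ (⊥ : Ideal A).jacobson := by
  rw [Ideal.mem_jacobson_iff]
  intro y
  obtain ⟨N, hN⟩ := h y
  have hn : IsNilpotent (y * x) := ⟨N, hN⟩
  obtain ⟨u, hu⟩ := hn.isUnit_add_one
  refine ⟨↑u⁻¹, ?_⟩
  have : (↑u⁻¹ : A) * (y * x + 1) = 1 := by rw [← hu]; simp
  rw [Ideal.mem_bot, mul_assoc, ← this]; noncomm_ring

lemma aux_iso {A : Type} [Ring A] {e f a x : A} (he : e * e = e) (hf : f * f = f)
    (hae : a * e = a) (hfa : f * a = a) (hx1 : e * x = x) (hx2 : x * f = x)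
    (h1 : a * x = f) (h2 : x * a = e) :
    Nonempty ((Submodule.span A {e} : Submodule A A) ≃ₗ[A] (Submodule.span A {f} : Submodule A A)) := by
  have key : ∀ (e f a x : A), a * x = f → a * e = a → e * x = x → x * f = x → 
      ∀ y ∈ (Submodule.span A {e} : Submodule A A), y * x ∈ (Submodule.span A {f} : Submodule A A) := by
    intro e f a x _ _ h3 h4 y hy
    obtain ⟨c, rfl⟩ := Submodule.mem_span_singleton.1 hy
    refine Submodule.mem_span_singleton.2 ⟨c * x, ?_⟩
    simp only [smul_eq_mul]
    rw [mul_assoc, h4, mul_assoc, h3]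
  refine ⟨LinearEquiv.ofLinearMap
    (LinearMap.restrict (LinearMap.toSpanSingleton A A x) (fun y hy => ?_))
    (LinearMap.restrict (LinearMap.toSpanSingleton A A a) (fun y hy => ?_)) ?_ ?_⟩
  · exact key e f a x h1 hae hx1 hx2 y hy
  · exact key f e x a h2 hx2 hfa hae y hy
  · ext ⟨y, hy⟩
    obtain ⟨c, rfl⟩ := Submodule.mem_span_singleton.1 hy
    show c * f * a * x = c * f
    rw [mul_assoc, h1, mul_assoc, hf]
  · ext ⟨y, hy⟩
    obtain ⟨c, rfl⟩ := Submodule.mem_span_singleton.1 hy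
    show c * e * x * a = c * e
    rw [mul_assoc, h2, mul_assoc, he]

lemma aux_offdiag {k Λ : Type} [Field k] [Ring Λ] [Algebra k Λ] [FiniteDimensional k Λ]
    {e f : Λ} (he : IsPrimitiveIdempotent Λ e) (hf : IsPrimitiveIdempotent Λ f)
    (hiso : IsEmpty ((Submodule.span Λ {e} : Submodule Λ Λ) ≃ₗ[Λ]
      (Submodule.span Λ {f} : Submodule Λ Λ)))
    {x : Λ} (hx1 : e * x = x) (hx2 : x * f = x) : x ∈ (⊥ : Ideal Λ).jacobson := by
  have hee : e * e = e := he.1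
  have hff : f * f = f := hf.1
  apply aux_mem_jac
  intro y
  rcases aux_corner (k := k) (z := f * y * x) hf (by simp only [← mul_assoc, hff])
    (by rw [mul_assoc, hx2]) with ⟨N, hN⟩ | ⟨w, hw⟩
  · refine ⟨N + 1, ?_⟩
    have : ∀ M : ℕ, (y * x) ^ (M + 1) = y * x * (f * y * x) ^ M := by
      intro M
      induction M with
      | zero => simp
      | succ M ih =>
        rw [pow_succ' (y * x), ih, pow_succ' (f * y * x)]
        calc y * x * (y * x * (f * y * x) ^ M)
            = y * (x * f) * (y * x * (f * y * x) ^ M) := by rw [hx2]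
          _ = _ := by noncomm_ring
    rw [this, hN, mul_zero]
  · exfalso
    have ha : (f * w * f * y * e) * x = f := by
      calc (f * w * f * y * e) * x = f * (w * (f * y * (e * x))) := by noncomm_ring
        _ = f := by rw [hx1, hw, hff]
    set a := f * w * f * y * e with hadef
    have hae : a * e = a := by rw [hadef, mul_assoc, hee]
    have hfa : f * a = a := by rw [hadef]; simp only [← mul_assoc, hff]
    have hxa : (x * a) * (x * a) = x * a := by
      calc (x * a) * (x * a) = x * (a * x) * a := by noncomm_ring
        _ = x * a := by rw [ha, hx2]
    have hea : e * (x * a) = x * a := by rw [← mul_assoc, hx1]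
    have hae' : (x * a) * e = x * a := by rw [mul_assoc, hae]
    rcases he.2.2 (x * a) (e - x * a) hxa
      (by show (e - x * a) * (e - x * a) = e - x * a
          rw [sub_mul, mul_sub, mul_sub, hee, hea, hae', hxa]; simp)
      (by rw [mul_sub, hae', hxa, sub_self]) (by rw [sub_mul, hea, hxa, sub_self]) (by simp)
      with h | h
    · apply hf.2.1
      calc f = f * f := hff.symm
        _ = (a * x) * (a * x) := by rw [ha]
        _ = a * (x * a) * x := by noncomm_ring
        _ = 0 := by rw [h]; simp
    · obtain ⟨φ⟩ := aux_iso hee hff hae hfa hx1 hx2 ha (sub_eq_zero.1 h).symm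
      exact hiso.elim φ

lemma aux_central {k Λ : Type} [Field k] [Ring Λ] [Algebra k Λ] [FiniteDimensional k Λ]
    (hbasic : IsBasicRing Λ) {f : Λ} (hf : f * f = f) (x : Λ) :
    f * x - x * f ∈ (⊥ : Ideal Λ).jacobson := by
  obtain ⟨n, e, ⟨hprim, horth, hsum⟩, hiso⟩ := hbasic
  set r := (⊥ : Ideal Λ).jacobson with hr
  have hee : ∀ i, e i * e i = e i := fun i => (hprim i).1
  have hoff : ∀ i j, i ≠ j → ∀ x, e i * x * e j ∈ r := fun i j hij x =>
    aux_offdiag (k := k) (hprim i) (hprim j) (hiso i j hij)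
      (by simp only [← mul_assoc, hee]) (by rw [mul_assoc, hee])
  let π := Ideal.Quotient.mk r
  have hπ : ∀ x, x ∈ r ↔ π x = 0 := fun x => Ideal.Quotient.eq_zero_iff_mem.symm
  have hoff' : ∀ i j, i ≠ j → ∀ x, π (e i) * π x * π (e j) = 0 := fun i j hij x => by
    rw [← map_mul, ← map_mul, ← hπ]; exact hoff i j hij x
  have hsum' : ∑ i, π (e i) = 1 := by rw [← map_sum, hsum, map_one]
  have hl : ∀ i x, π (e i) * π x = π (e i) * π x * π (e i) := by
    intro i x
    conv_lhs => rw [← mul_one (π (e i) * π x), ← hsum', Finset.mul_sum]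
    exact Finset.sum_eq_single i (fun j _ hj => hoff' i j hj.symm x) (by simp)
  have hrr : ∀ i x, π x * π (e i) = π (e i) * π x * π (e i) := by
    intro i x
    conv_lhs => rw [← one_mul (π x * π (e i)), ← hsum', Finset.sum_mul]
    simp only [← mul_assoc]
    exact Finset.sum_eq_single i (fun j _ hj => hoff' j i hj x) (by simp)
  have hcomm : ∀ i x, π (e i) * π x = π x * π (e i) := fun i x => by rw [hl, hrr i x]
  have hff : π f * π f = π f := by rw [← map_mul, hf]
  have hcase : ∀ i, π (e i) * π f = 0 ∨ π (e i) * π f = π (e i) := by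
    intro i
    have hE : π (e i) * π (e i) = π (e i) := by rw [← map_mul, hee]
    have hval : π (e i * f * e i) = π (e i) * π f := by
      rw [map_mul, map_mul]; exact (hl i f).symm
    have hidem : (π (e i) * π f) * (π (e i) * π f) = π (e i) * π f := by
      calc (π (e i) * π f) * (π (e i) * π f) = (π (e i) * π f * π (e i)) * π f := by
            simp only [mul_assoc]
        _ = π (e i) * π f := by rw [← hl, mul_assoc, hff]
    rcases aux_corner (k := k) (z := e i * f * e i) (hprim i)
      (by simp only [← mul_assoc, hee]) (by rw [mul_assoc, hee]) with ⟨N, hN⟩ | ⟨w, hw⟩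
    · left
      have h0 : (π (e i) * π f) ^ N = 0 := by rw [← hval, ← map_pow, hN, map_zero]
      have hI : IsIdempotentElem (π (e i) * π f) := hidem
      have := hI.pow_succ_eq N
      rw [pow_succ, h0, zero_mul] at this
      exact this.symm
    · right
      have h1 : π w * (π (e i) * π f) = π (e i) := by rw [← hval, ← map_mul, hw]
      have h2 : π (e i) * π f = π (e i) := by
        calc π (e i) * π f = π w * (π (e i) * π f) * π f := by rw [h1]
          _ = π w * (π (e i) * (π f * π f)) := by simp only [mul_assoc]
          _ = π (e i) := by rw [hff, h1]
      exact h2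
  rw [hπ, map_sub, map_mul, map_mul, sub_eq_zero]
  have e1 : π f * π x = ∑ i, π (e i) * π f * π x := by
    rw [← Finset.sum_mul, ← Finset.sum_mul, hsum', one_mul]
  have e2 : π x * π f = ∑ i, π x * (π (e i) * π f) := by
    rw [← Finset.mul_sum, ← Finset.sum_mul, hsum', one_mul]
  rw [e1, e2]
  refine Finset.sum_congr rfl fun i _ => ?_
  rcases hcase i with h | h
  · rw [h]; simp
  · rw [h, hcomm]

lemma aux_pow_le {A : Type} [Ring A] (I : Ideal A) [I.IsTwoSided] (n : ℕ) :
    (leftIdealPow A I n : Ideal A) ≤ (I ^ n : Ideal A) := by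
  induction n with
  | zero => rw [Submodule.pow_zero, Ideal.one_eq_top]; exact le_top
  | succ n ih =>
    rw [leftIdealPow, Submodule.span_le]
    rintro _ ⟨a, ha, b, hb, rfl⟩
    rcases Nat.eq_zero_or_pos n with rfl | hn
    · rw [zero_add, Submodule.pow_one]
      exact Ideal.mul_mem_right b I ha
    · rw [Submodule.pow_succ' I hn.ne']
      exact Ideal.mul_mem_mul ha (ih hb)

lemma aux_stable_jac {k Λ : Type} [Field k] [Ring Λ] [Algebra k Λ] (φ : Λ ≃ₐ[k] Λ) {x : Λ}
    (hx : x ∈ (⊥ : Ideal Λ).jacobson) : φ x ∈ (⊥ : Ideal Λ).jacobson := by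
  rw [Ideal.mem_jacobson_iff] at hx ⊢
  intro y
  obtain ⟨z, hz⟩ := hx (φ.symm y)
  refine ⟨φ z, ?_⟩
  rw [Ideal.mem_bot] at hz ⊢
  simpa using congrArg φ hz

lemma aux_stable {k Λ : Type} [Field k] [Ring Λ] [Algebra k Λ] (φ : Λ ≃ₐ[k] Λ) (n : ℕ) :
    ∀ x ∈ leftIdealPow Λ ((⊥ : Ideal Λ).jacobson) n,
      φ x ∈ leftIdealPow Λ ((⊥ : Ideal Λ).jacobson) n := by
  induction n with
  | zero => intro x _; exact Submodule.mem_top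
  | succ n ih =>
    intro x hx
    rw [leftIdealPow] at hx
    induction hx using Submodule.span_induction with
    | mem x h =>
      obtain ⟨a, ha, b, hb, rfl⟩ := h
      rw [map_mul, leftIdealPow]
      exact Submodule.subset_span ⟨_, aux_stable_jac φ ha, _, ih b hb, rfl⟩
    | zero => simp
    | add x y _ _ hx hy => rw [map_add]; exact add_mem hx hy
    | smul a x _ hx => rw [smul_eq_mul, map_mul]; exact Submodule.smul_mem _ (φ a) hx

variable {k Λ S : Type} [Field k] [Ring Λ] [Algebra k Λ] [Group S] [Fintype S]

/-- The left ideal `𝔯^i ⊗ kS`. -/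
def auxL (σ : S →* (Λ ≃ₐ[k] Λ)) (i : ℕ) : Submodule (SGA σ) (SGA σ) where
  carrier := {f | ∀ g, f.toFun g ∈ leftIdealPow Λ ((⊥ : Ideal Λ).jacobson) i}
  zero_mem' g := by simp
  add_mem' ha hb g := by rw [SGA.toFun_add]; exact add_mem (ha g) (hb g)
  smul_mem' c f hf g := by
    rw [smul_eq_mul, SGA.toFun_mul]
    exact Submodule.sum_mem _ fun h _ => Submodule.smul_mem _ _ (aux_stable _ _ _ (hf _))

/-- `a ⊗ g`. -/
def auxT (σ : S →* (Λ ≃ₐ[k] Λ)) (a : Λ) (g : S) : SGA σ := ⟨fun x => if x = g then a else 0⟩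

lemma auxT_mul (σ : S →* (Λ ≃ₐ[k] Λ)) (a b : Λ) (g h : S) :
    auxT σ a g * auxT σ b h = auxT σ (a * σ g b) (g * h) := by
  ext x
  rw [SGA.toFun_mul, Finset.sum_eq_single g]
  · by_cases hx : x = g * h
    · simp [auxT, hx]
    · have : g⁻¹ * x ≠ h := fun hc => hx (by rw [← hc]; group)
      simp [auxT, hx, this]
  · intro c _ hc; simp [auxT, hc]
  · simp

lemma aux_toFun_sum (σ : S →* (Λ ≃ₐ[k] Λ)) {ι : Type} (s : Finset ι) (F : ι → SGA σ) (x : S) :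
    (∑ i ∈ s, F i).toFun x = ∑ i ∈ s, (F i).toFun x := by
  induction s using Finset.induction_on with
  | empty => simp
  | insert a s ha ih => rw [Finset.sum_insert ha, Finset.sum_insert ha, SGA.toFun_add, ih]

lemma auxT_sum (σ : S →* (Λ ≃ₐ[k] Λ)) (f : SGA σ) : f = ∑ g, auxT σ (f.toFun g) g := by
  ext x
  rw [aux_toFun_sum]
  simp [auxT]

lemma auxT_add (σ : S →* (Λ ≃ₐ[k] Λ)) (a b : Λ) (g : S) :
    auxT σ (a + b) g = auxT σ a g + auxT σ b g := by
  ext x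
  by_cases hx : x = g <;> simp [auxT, hx]

lemma auxT_zero (σ : S →* (Λ ≃ₐ[k] Λ)) (g : S) : auxT σ 0 g = 0 := by
  ext x; simp [auxT]

lemma auxL_mul (σ : S →* (Λ ≃ₐ[k] Λ)) {i : ℕ} {a b : SGA σ}
    (ha : ∀ g, a.toFun g ∈ (⊥ : Ideal Λ).jacobson) (hb : b ∈ auxL σ i) :
    a * b ∈ auxL σ (i + 1) := by
  intro g
  rw [SGA.toFun_mul]
  refine Submodule.sum_mem _ fun h _ => ?_
  rw [leftIdealPow]
  exact Submodule.subset_span ⟨_, ha h, _, aux_stable _ _ _ (hb _), rfl⟩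

lemma auxL_le_jac [FiniteDimensional k Λ] (σ : S →* (Λ ≃ₐ[k] Λ)) {f : SGA σ}
    (hf : ∀ g, f.toFun g ∈ (⊥ : Ideal Λ).jacobson) : f ∈ (⊥ : Ideal (SGA σ)).jacobson := by
  have : IsArtinianRing Λ := IsArtinianRing.of_finite k Λ
  obtain ⟨N, hN⟩ : IsNilpotent ((⊥ : Ideal Λ).jacobson) := by
    rw [Ideal.jacobson_bot]; exact IsSemiprimaryRing.isNilpotent
  apply aux_mem_jac
  intro y
  refine ⟨N, ?_⟩
  have hyf : ∀ g, (y * f).toFun g ∈ (⊥ : Ideal Λ).jacobson := by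
    intro g
    rw [SGA.toFun_mul]
    exact Submodule.sum_mem _ fun h _ => Submodule.smul_mem _ _ (aux_stable_jac _ (hf _))
  have hp : ∀ M : ℕ, (y * f) ^ M ∈ auxL σ M := by
    intro M
    induction M with
    | zero => intro g; exact Submodule.mem_top
    | succ M ih => rw [pow_succ']; exact auxL_mul σ hyf ih
  ext g
  have h1 := aux_pow_le _ _ (hp N g)
  rw [hN] at h1
  simpa using h1

lemma aux_contract (σ : S →* (Λ ≃ₐ[k] Λ)) {x : Λ}
    (hx : auxT σ x 1 ∈ (⊥ : Ideal (SGA σ)).jacobson) : x ∈ (⊥ : Ideal Λ).jacobson := by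
  rw [Ideal.mem_jacobson_iff] at hx ⊢
  intro y
  obtain ⟨z, hz⟩ := hx (auxT σ y 1)
  refine ⟨z.toFun 1, ?_⟩
  rw [Ideal.mem_bot] at hz ⊢
  have h1 : z * auxT σ y 1 * auxT σ x 1 + z = 1 := sub_eq_zero.1 hz
  rw [mul_assoc, auxT_mul] at h1
  have h2 := congrArg (fun f => f.toFun 1) h1
  simp only [SGA.toFun_add, SGA.toFun_mul, SGA.toFun_one] at h2
  rw [Finset.sum_eq_single 1] at h2
  · simp [auxT] at h2
    rw [sub_eq_zero, mul_assoc]; exact h2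
  · intro b _ hb
    simp [auxT, hb]
  · simp

lemma aux_jac [FiniteDimensional k Λ] (hbasic : IsBasicRing Λ) (σ : S →* (Λ ≃ₐ[k] Λ))
    (n : ℕ) (e : Fin n → Λ)
    (hE : IsCompletePrimitiveOrthogonalSystem Λ e)
    (hclosed : ∀ (g : S) (i : Fin n), ∃ j : Fin n, σ g (e i) = e j)
    (hfree : ∀ (g : S), g ≠ 1 → ∀ i : Fin n, σ g (e i) ≠ e i) (f : SGA σ) :
    f ∈ (⊥ : Ideal (SGA σ)).jacobson ↔ ∀ g, f.toFun g ∈ (⊥ : Ideal Λ).jacobson := by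
  refine ⟨?_, auxL_le_jac σ⟩
  obtain ⟨hprim, horth, hsum⟩ := hE
  have hee : ∀ i, e i * e i = e i := fun i => (hprim i).1
  have hoff : ∀ i j, i ≠ j → ∀ x, e i * x * e j ∈ (⊥ : Ideal Λ).jacobson := by
    intro i j hij x
    have h := Ideal.mul_mem_right (e j) _ (aux_central (k := k) hbasic (hee i) x)
    rwa [sub_mul, mul_assoc x, horth i j hij, mul_zero, sub_zero] at h
  have key : ∀ f : SGA σ, f ∈ (⊥ : Ideal (SGA σ)).jacobson →
      f.toFun 1 ∈ (⊥ : Ideal Λ).jacobson := by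
    intro f hf
    have hdiag : ∀ i, e i * f.toFun 1 * e i ∈ (⊥ : Ideal Λ).jacobson := by
      intro i
      apply aux_contract σ
      have hm : auxT σ (e i) 1 * f * auxT σ (e i) 1 ∈ (⊥ : Ideal (SGA σ)).jacobson :=
        Ideal.mul_mem_right _ _ (Ideal.mul_mem_left _ _ hf)
      have hcoef : auxT σ (e i) 1 * f * auxT σ (e i) 1
          = ∑ g, auxT σ (e i * f.toFun g * σ g (e i)) g := by
        conv_lhs => rw [auxT_sum σ f, Finset.mul_sum, Finset.sum_mul]
        refine Finset.sum_congr rfl fun g _ => ?_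
        rw [auxT_mul, auxT_mul]; simp
      rw [hcoef, ← Finset.add_sum_erase _ _ (Finset.mem_univ (1 : S))] at hm
      have hrest : ∑ g ∈ Finset.univ.erase (1 : S), auxT σ (e i * f.toFun g * σ g (e i)) g
          ∈ (⊥ : Ideal (SGA σ)).jacobson := by
        refine Submodule.sum_mem _ fun g hg => auxL_le_jac σ fun h => ?_
        simp only [auxT]
        split_ifs
        · obtain ⟨j, hj⟩ := hclosed g i
          rw [hj]
          refine hoff i j (fun hij => hfree g (Finset.ne_of_mem_erase hg) i ?_) _
          rw [hj, hij]
        · exact zero_mem _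
      have := (Ideal.add_mem_iff_left _ hrest).1 hm
      simpa using this
    have hx : f.toFun 1 = ∑ i, ∑ j, e i * f.toFun 1 * e j := by
      simp only [← Finset.mul_sum, ← Finset.sum_mul, hsum, one_mul, mul_one]
    rw [hx]
    refine Submodule.sum_mem _ fun i _ => Submodule.sum_mem _ fun j _ => ?_
    by_cases hij : i = j
    · subst hij; exact hdiag i
    · exact hoff i j hij _
  intro hf g
  have h := key (f * auxT σ 1 g⁻¹) (Ideal.mul_mem_right _ _ hf)
  rw [SGA.toFun_mul, Finset.sum_eq_single g] at h
  · simpa [auxT] using h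
  · intro b _ hb
    have : b ≠ g := hb
    simp [auxT, this]
  · simp

end Helpers

/-- Let `S` be a finite `p`-group (`p = char k`) acting on `Λ`, and
`E = {e_1, ..., e_n}` a complete set of primitive orthogonal idempotents of `Λ` closed under
the action of `S`, on which `S` acts freely. Then for every `i ≥ 1`, the `i`-th power of the
Jacobson radical of `ΛS` equals `𝔯^i ⊗_k kS`, where `𝔯` is the Jacobson radical of `Λ`. -/
theorem skew_group_algebra_radical_powers
    (k : Type) [Field k] [IsAlgClosed k] (p : ℕ) [CharP k p]
    (Λ : Type) [Ring Λ] [Algebra k Λ] [FiniteDimensional k Λ]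
    (hconn : IsConnectedRing Λ) (hbasic : IsBasicRing Λ)
    (S : Type) [Group S] [Fintype S] (hp : IsPGroup p S)
    (σ : S →* (Λ ≃ₐ[k] Λ))
    (n : ℕ) (e : Fin n → Λ)
    (hE : IsCompletePrimitiveOrthogonalSystem Λ e)
    (hclosed : ∀ (g : S) (i : Fin n), ∃ j : Fin n, σ g (e i) = e j)
    (hfree : ∀ (g : S), g ≠ 1 → ∀ i : Fin n, σ g (e i) ≠ e i) :
    ∀ i : ℕ, 1 ≤ i →
      ((leftIdealPow (SGA σ) ((⊥ : Ideal (SGA σ)).jacobson) i : Set (SGA σ)) =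
        {f : SGA σ | ∀ g : S, f.toFun g ∈ leftIdealPow Λ ((⊥ : Ideal Λ).jacobson) i}) := by
  intro i _
  have hJ := aux_jac hbasic σ n e hE hclosed hfree
  suffices h : leftIdealPow (SGA σ) ((⊥ : Ideal (SGA σ)).jacobson) i = auxL σ i by
    rw [h]; rfl
  clear * - hJ
  induction i with
  | zero =>
    symm
    rw [leftIdealPow, eq_top_iff]
    intro f _ g
    exact Submodule.mem_top
  | succ i ih =>
    apply le_antisymm
    · rw [leftIdealPow, Submodule.span_le]
      rintro _ ⟨a, ha, b, hb, rfl⟩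
      exact auxL_mul σ ((hJ a).1 ha) (ih ▸ hb)
    · intro f hf
      rw [auxT_sum σ f]
      refine Submodule.sum_mem _ fun g _ => ?_
      have hy := hf g
      generalize f.toFun g = y at hy
      rw [leftIdealPow] at hy
      induction hy using Submodule.span_induction with
      | mem x h =>
        obtain ⟨a, ha, b, hb, rfl⟩ := h
        rw [leftIdealPow]
        refine Submodule.subset_span ⟨auxT σ a 1, (hJ _).2 fun h => ?_, auxT σ b g, ?_, ?_⟩
        · simp only [auxT]; split_ifs
          · exact ha
          · exact zero_mem _
        · rw [ih]; intro h
          simp only [auxT]; split_ifs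
          · exact hb
          · exact zero_mem _
        · rw [auxT_mul]; simp
      | zero => rw [auxT_zero]; exact zero_mem _
      | add x y _ _ hx hy => rw [auxT_add]; exact add_mem hx hy
      | smul a x _ hx =>
        have : auxT σ (a • x) g = auxT σ a 1 * auxT σ x g := by rw [auxT_mul]; simp
        rw [this]; exact Submodule.smul_mem _ _ hx
end
end

section
/- Let S be a finite p-group acting on Λ by algebra automorphisms, where p = char k, and E = {e_1,...,e_n} a complete set of primitive orthogonal idempotents of Λ closed under the action of S, and suppose S acts freely on E. Then the regular module of the skew group algebra ΛS is isomorphic, as a ΛS-module, to the direct sum of |S| copies of the trivial ΛS-module Λ (the module Λ on which λ⊗g acts by λ·g(−)). -/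
set_option maxHeartbeats 1000000
set_option linter.unusedSectionVars false
set_option linter.unusedVariables false

noncomputable section
open Finset
open scoped Classical


section TrivialModule

namespace SGA

variable {k : Type} [CommRing k] {Λ : Type} [Ring Λ] [Algebra k Λ]
variable {G : Type} [Group G] [Fintype G]

/-- The trivial `ΛG`-module: the vector space `Λ` with action `(λ ⊗ g) • μ = λ · g(μ)`. -/
def TrivMod (σ : G →* (Λ ≃ₐ[k] Λ)) : Type := Λ

variable {σ : G →* (Λ ≃ₐ[k] Λ)}

instance : AddCommGroup (TrivMod σ) := inferInstanceAs (AddCommGroup Λ)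

instance : SMul (SGA σ) (TrivMod σ) := ⟨fun f μ => ∑ g : G, f.toFun g * σ g μ⟩

lemma trivSmul_def (f : SGA σ) (μ : TrivMod σ) :
    f • μ = ∑ g : G, f.toFun g * σ g μ := rfl

instance : Module (SGA σ) (TrivMod σ) where
  one_smul μ := by
    rw [trivSmul_def]
    rw [Finset.sum_eq_single (1 : G)]
    · exact (by simp [toFun_one] : ∀ ν : Λ, (1 : SGA σ).toFun 1 * σ 1 ν = ν) μ
    · intro b _ hb; simp [toFun_one, hb]
    · simp
  mul_smul f h μ := by
    rw [trivSmul_def, trivSmul_def, trivSmul_def]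
    simp only [toFun_mul, Finset.sum_mul, map_sum, Finset.mul_sum, map_mul]
    rw [Finset.sum_comm]
    refine Finset.sum_congr rfl fun u _ => ?_
    rw [← Fintype.sum_equiv (Equiv.mulLeft u)
      (fun v => f.toFun u * σ u (h.toFun v) * σ (u * v) μ)
      (fun x => f.toFun u * σ u (h.toFun (u⁻¹ * x)) * σ x μ)
      (fun v => by simp [Equiv.mulLeft])]
    refine Finset.sum_congr rfl fun v _ => ?_
    have h4 : σ u (σ v μ) = σ (u * v) μ := by rw [map_mul σ]; rfl
    rw [← h4, mul_assoc]
  smul_zero f := by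
    rw [trivSmul_def]; change ∑ g : G, f.toFun g * σ g (0 : Λ) = (0 : Λ); simp
  smul_add f μ ν := by
    rw [trivSmul_def, trivSmul_def, trivSmul_def]
    exact (by simp [mul_add, Finset.sum_add_distrib] : ∀ a b : Λ,
      ∑ g : G, f.toFun g * σ g (a + b) =
        ∑ g : G, f.toFun g * σ g a + ∑ g : G, f.toFun g * σ g b) μ ν
  add_smul f h μ := by
    rw [trivSmul_def, trivSmul_def, trivSmul_def]
    exact (by simp [add_mul, Finset.sum_add_distrib] : ∀ a : Λ,
      ∑ g : G, (f + h).toFun g * σ g a =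
        ∑ g : G, f.toFun g * σ g a + ∑ g : G, h.toFun g * σ g a) μ
  zero_smul μ := by
    rw [trivSmul_def]
    exact (by simp : ∀ a : Λ, ∑ g : G, (0 : SGA σ).toFun g * σ g a = 0) μ

end SGA

end TrivialModule
/-- A free action on the idempotents admits an equivariant labelling by the group. -/
lemma exists_label {k Λ S : Type} [Field k] [Ring Λ] [Algebra k Λ] [Group S]
    (σ : S →* (Λ ≃ₐ[k] Λ)) {n : ℕ} (e : Fin n → Λ)
    (hfree : ∀ (g : S), g ≠ 1 → ∀ i : Fin n, σ g (e i) ≠ e i) :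
    ∃ c : Fin n → S, ∀ g i j, σ g (e i) = e j → c j = g * c i := by
  have hmul : ∀ g h x, σ (g * h) x = σ g (σ h x) := fun g h x => by rw [map_mul]; rfl
  have hinv : ∀ g x, σ g⁻¹ (σ g x) = x := fun g x => by rw [← hmul]; simp
  let r : Setoid (Fin n) :=
    { r := fun i j => ∃ g, σ g (e i) = e j
      iseqv := ⟨fun i => ⟨1, by simp⟩,
        fun {i j} ⟨g, h⟩ => ⟨g⁻¹, by rw [← h, hinv]⟩,
        fun {i j l} ⟨g, h⟩ ⟨g', h'⟩ => ⟨g' * g, by rw [hmul, h, h']⟩⟩ }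
  have hrep : ∀ i, ∃ g, σ g (e (Quotient.mk r i).out) = e i := fun i =>
    Quotient.exact (s := r) (Quotient.out_eq (Quotient.mk r i))
  choose c hc using hrep
  refine ⟨c, fun g i j h => ?_⟩
  have hq : Quotient.mk r i = Quotient.mk r j := Quotient.sound (s := r) ⟨g, h⟩
  have h1 := hc j
  rw [← hq, ← h, ← hc i, ← hmul] at h1
  by_contra hne
  refine hfree ((g * c i)⁻¹ * c j) (fun h2 => hne ?_) (Quotient.mk r i).out ?_
  · exact (inv_mul_eq_one.1 h2).symm
  · rw [hmul, h1, hinv]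

/-- From an orthogonal family of idempotents permuted regularly by `S` we get the isomorphism. -/
lemma iso_of_family {k Λ S : Type} [Field k] [Ring Λ] [Algebra k Λ] [Group S] [Fintype S]
    (σ : S →* (Λ ≃ₐ[k] Λ)) (ε : S → Λ)
    (hσ : ∀ g h, σ g (ε h) = ε (g * h))
    (hid : ∀ g, ε g * ε g = ε g) (hort : ∀ g h, g ≠ h → ε g * ε h = 0)
    (hsum : ∑ g, ε g = 1) :
    Nonempty ((SGA σ) ≃ₗ[SGA σ] (S → SGA.TrivMod σ)) := by
  have hsumr : ∀ h, ∑ g, ε (g * h) = 1 := fun h => by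
    rw [← hsum]; exact Fintype.sum_equiv (Equiv.mulRight h) _ _ (fun _ => rfl)
  have hsuml : ∀ g, ∑ h, ε (g * h) = 1 := fun h => by
    rw [← hsum]; exact Fintype.sum_equiv (Equiv.mulLeft h) _ _ (fun _ => rfl)
  let Φ : SGA σ →ₗ[SGA σ] (S → SGA.TrivMod σ) :=
    LinearMap.toSpanSingleton (SGA σ) (S → SGA.TrivMod σ) (fun h => (ε h : Λ))
  have hΦ : ∀ f h, Φ f h = (∑ g, f.toFun g * ε (g * h) : Λ) := fun f h => by
    change (∑ g, f.toFun g * σ g (ε h) : Λ) = _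
    simp only [hσ]
  let Ψ : (S → SGA.TrivMod σ) → SGA σ := fun m => ⟨fun g => ∑ h, (show Λ from m h) * ε (g * h)⟩
  have hl : Function.LeftInverse Ψ Φ := by
    intro f
    ext g
    change ∑ h, (show Λ from Φ f h) * ε (g * h) = f.toFun g
    have : ∀ h, (show Λ from Φ f h) * ε (g * h) = f.toFun g * ε (g * h) := by
      intro h
      rw [hΦ]
      change (∑ g, f.toFun g * ε (g * h) : Λ) * ε (g * h) = _
      rw [Finset.sum_mul, Finset.sum_eq_single g]
      · rw [mul_assoc, hid]
      · intro b _ hb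
        rw [mul_assoc, hort _ _ (fun h' => hb (mul_right_cancel h')), mul_zero]
      · simp
    simp only [this]
    rw [← Finset.mul_sum, hsuml, mul_one]
  have hr : Function.RightInverse Ψ Φ := by
    intro m
    funext h
    rw [hΦ]
    suffices key : ∀ m : S → Λ, (∑ g, (∑ h', m h' * ε (g * h')) * ε (g * h) : Λ) = m h from
      key m
    intro m
    have : ∀ g, (∑ h', m h' * ε (g * h')) * ε (g * h) = m h * ε (g * h) := by
      intro g
      rw [Finset.sum_mul, Finset.sum_eq_single h]
      · rw [mul_assoc, hid]
      · intro b _ hb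
        rw [mul_assoc, hort _ _ (fun h' => hb (mul_left_cancel h')), mul_zero]
      · simp
    simp only [this]
    rw [← Finset.mul_sum, hsumr, mul_one]
  exact ⟨LinearEquiv.ofBijective Φ ⟨hl.injective, hr.surjective⟩⟩

/-- Let `S` be a finite `p`-group (`p = char k`) acting on `Λ`, with a complete
set `E` of primitive orthogonal idempotents closed under the action of `S` on which `S` acts
freely. Then the regular module of `ΛS` is isomorphic to the direct sum of `|S|` copies of the
trivial `ΛS`-module `Λ`. -/
theorem skew_group_algebra_regular_module
    (k : Type) [Field k] [IsAlgClosed k] (p : ℕ) [CharP k p]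
    (Λ : Type) [Ring Λ] [Algebra k Λ] [FiniteDimensional k Λ]
    (hconn : IsConnectedRing Λ) (hbasic : IsBasicRing Λ)
    (S : Type) [Group S] [Fintype S] (hp : IsPGroup p S)
    (σ : S →* (Λ ≃ₐ[k] Λ))
    (n : ℕ) (e : Fin n → Λ)
    (hE : IsCompletePrimitiveOrthogonalSystem Λ e)
    (hclosed : ∀ (g : S) (i : Fin n), ∃ j : Fin n, σ g (e i) = e j)
    (hfree : ∀ (g : S), g ≠ 1 → ∀ i : Fin n, σ g (e i) ≠ e i) :
    Nonempty ((SGA σ) ≃ₗ[SGA σ] (Fin (Fintype.card S) → SGA.TrivMod σ)) := by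
  obtain ⟨hprim, hort, hsum⟩ := hE
  have hinj : Function.Injective e := by
    intro i j hij
    by_contra hne
    have h0 := hort i j hne
    rw [← hij, (hprim i).1.eq] at h0
    exact (hprim i).2.1 h0
  obtain ⟨c, hc⟩ := exists_label σ e hfree
  have hmain := iso_of_family σ (fun g => ∑ i with c i = g, e i) ?_ ?_ ?_ ?_
  · obtain ⟨F⟩ := hmain
    exact ⟨F.trans (LinearEquiv.funCongrLeft (SGA σ) (SGA.TrivMod σ)
      (Fintype.equivFin S).symm)⟩
  · intro g h
    choose π hπ using hclosed g
    have hπi : Function.Injective π := fun i j hij =>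
      hinj ((σ g).injective (by rw [hπ, hπ, hij]))
    have hπb : Function.Bijective π := Finite.injective_iff_bijective.1 hπi
    simp only [map_sum, Finset.sum_filter]
    refine Fintype.sum_equiv (Equiv.ofBijective π hπb) _ _ (fun i => ?_)
    have := hc g i (π i) (hπ i)
    by_cases hh : c i = h <;> simp [this, hπ, hh]
  · intro g
    simp only [Finset.sum_mul]
    refine Finset.sum_congr rfl fun i hi => ?_
    rw [Finset.mul_sum, Finset.sum_eq_single i]
    · exact (hprim i).1.eq
    · intro j _ hj
      exact hort i j hj.symm
    · intro h
      exact absurd hi h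
  · intro g h hgh
    simp only [Finset.sum_mul, Finset.mul_sum]
    refine Finset.sum_eq_zero fun i hi => Finset.sum_eq_zero fun j hj => ?_
    simp only [Finset.mem_filter, Finset.mem_univ, true_and] at hi hj
    first
      | exact hort i j (fun hij => hgh (by rw [← hi, ← hj, hij]))
      | exact hort j i (fun hij => hgh (by rw [← hi, ← hj, hij]))
  · rw [← hsum]
    exact Finset.sum_fiberwise _ _ _
end
end
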